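/- Let n ≥ 2. Then: |ℱ̄ₙ(÷)| = Σ_{k=1}^{n−1} |ℱ̄_k(+, ×)| · |ℱ̄_{n−k}(+, ×)|; |ℬ̄ₙ(÷)| = Σ_{k=1}^{n−1} |ℬ̄_{n−k}(+, −, ×)| · (2|ℱ̄_k(+, ×)| + ½|ℬ̄_k(+, −, ×)|); and |𝒞̄ₙ(÷)| = Σ_{k=1}^{n−1} |𝒞̄_{n−k}(+, −, ×)| · (2|ℱ̄_k(+, ×)| + |ℬ̄_k(+, −, ×)| + |𝒞̄_k(+, −, ×)|). -/

import Mathlib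

/- Common framework: `K = ℝ(x₁,x₂,…)` is the field of rational functions over `ℝ` in
countably many variables (the fraction field of `MvPolynomial ℕ ℝ`), arithmetic
expressions, the permutation action, isomorphism, types, the `EndsWith` classification,
multilinear forms and monicity, isomorphism classes and their counting. -/

open MvPolynomial

noncomputable section

abbrev P : Type := MvPolynomial ℕ ℝ
abbrev K : Type := FractionRing P

def toK : P →+* K := algebraMap P K

/-- The variable `xᵢ`, as an element of `K`. -/
def Xv (i : ℕ) : K := toK (X i)

/-- `Vars f` : the set of variables on which `f` depends, i.e. the variables occurring in a
representation of `f` as a quotient of two coprime polynomials. -/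
def Vars (f : K) : Set ℕ :=
  {i | ∃ p q : P, q ≠ 0 ∧ IsRelPrime p q ∧ f = toK p / toK q ∧ (i ∈ p.vars ∨ i ∈ q.vars)}

/-- `𝒜` : the smallest subset of `K` containing every variable and closed under the four
binary operations applied to expressions with disjoint variable sets. -/
inductive IsAE : K → Prop
  | var (i : ℕ) : IsAE (Xv i)
  | add {g h : K} : IsAE g → IsAE h → Disjoint (Vars g) (Vars h) → IsAE (g + h)
  | sub {g h : K} : IsAE g → IsAE h → Disjoint (Vars g) (Vars h) → IsAE (g - h)
  | mul {g h : K} : IsAE g → IsAE h → Disjoint (Vars g) (Vars h) → IsAE (g * h)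
  | div {g h : K} : IsAE g → IsAE h → Disjoint (Vars g) (Vars h) → IsAE (g / h)

/-- The action `σ·f` of a permutation of the variables on `K`, substituting `σ(xᵢ)` for `xᵢ`. -/
def permAct (σ : Equiv.Perm ℕ) : K ≃+* K :=
  IsFractionRing.ringEquivOfRingEquiv (renameEquiv ℝ σ).toRingEquiv

/-- `f ≅ g` : `f` and `g` are isomorphic, i.e. differ by a permutation of the variables. -/
def Iso (f g : K) : Prop := ∃ σ : Equiv.Perm ℕ, permAct σ f = g

/-- First type: `-f ∉ 𝒜`. -/
def FirstType (f : K) : Prop := IsAE f ∧ ¬ IsAE (-f)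

/-- Second type: `-f ∈ 𝒜` but `f ≇ -f`. -/
def SecondType (f : K) : Prop := IsAE f ∧ IsAE (-f) ∧ ¬ Iso f (-f)

/-- Third type: `-f ∈ 𝒜` and `f ≅ -f`. -/
def ThirdType (f : K) : Prop := IsAE f ∧ IsAE (-f) ∧ Iso f (-f)

/-- The four binary operators. -/
inductive Op : Type
  | add | sub | mul | div
deriving DecidableEq

/-- `EndsWith f o` : the arithmetic expression `f` ends with the operator `o`. -/
inductive EndsWith : K → Op → Prop
  | var (i : ℕ) : EndsWith (Xv i) Op.mul
  | add_base {i j : ℕ} (hij : i ≠ j) : EndsWith (Xv i + Xv j) Op.add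
  | sub_base {i j : ℕ} (hij : i ≠ j) : EndsWith (Xv i - Xv j) Op.sub
  | mul_base {i j : ℕ} (hij : i ≠ j) : EndsWith (Xv i * Xv j) Op.mul
  | div_base {i j : ℕ} (hij : i ≠ j) : EndsWith (Xv i / Xv j) Op.div
  | add_rec {g h : K} {o₁ o₂ : Op} : IsAE g → IsAE h → Disjoint (Vars g) (Vars h) →
      3 ≤ (Vars (g + h)).ncard → o₁ ≠ Op.sub → o₂ ≠ Op.sub →
      EndsWith g o₁ → EndsWith h o₂ → EndsWith (g + h) Op.add
  | mul_rec {g h : K} {o₁ o₂ : Op} : IsAE g → IsAE h → Disjoint (Vars g) (Vars h) →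
      3 ≤ (Vars (g * h)).ncard → o₁ ≠ Op.div → o₂ ≠ Op.div →
      EndsWith g o₁ → EndsWith h o₂ → EndsWith (g * h) Op.mul
  | div_rec {g h : K} {o₁ o₂ : Op} : IsAE g → IsAE h → Disjoint (Vars g) (Vars h) →
      3 ≤ (Vars (g / h)).ncard → o₁ ≠ Op.div → o₂ ≠ Op.div →
      EndsWith g o₁ → EndsWith h o₂ → EndsWith (g / h) Op.div
  | sub_rec {g h : K} {o₁ o₂ : Op} : IsAE g → IsAE h → Disjoint (Vars g) (Vars h) →
      3 ≤ (Vars (g - h)).ncard → o₁ ≠ Op.sub → o₂ ≠ Op.sub → FirstType h →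
      EndsWith g o₁ → EndsWith h o₂ → EndsWith (g - h) Op.sub

/-- `f` ends with one of the operators in `s`. -/
def EndsIn (f : K) (s : Set Op) : Prop := ∃ o ∈ s, EndsWith f o

/-- The binary operation on `K` corresponding to an operator. -/
def applyOp (o : Op) (a b : K) : K :=
  match o with
  | Op.add => a + b
  | Op.sub => a - b
  | Op.mul => a * b
  | Op.div => a / b

/-- The variable index set `{1, …, n}` (for the variables `x₁, …, xₙ`). -/
def varsUpTo (n : ℕ) : Set ℕ := {i | 1 ≤ i ∧ i ≤ n}

/-- `𝒜ₙ` : arithmetic expressions whose variable set is exactly `{x₁, …, xₙ}`. -/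
def AEn (n : ℕ) : Set K := {f | IsAE f ∧ Vars f = varsUpTo n}

/-- A multilinear polynomial: degree at most `1` in each variable. -/
def Multilinear (p : P) : Prop := ∀ i : ℕ, p.degreeOf i ≤ 1

/-- The key of a (multilinear) monomial: the sorted list of variables occurring in it;
keys are compared in the lexicographic order on lists. -/
def monKey (m : ℕ →₀ ℕ) : List ℕ := m.support.sort (· ≤ ·)

/-- A (multilinear) polynomial is monic if the coefficient of its lexicographically
leading (i.e. first) monomial is positive. -/
def MonicML (p : P) : Prop :=
  ∃ m ∈ p.support, 0 < p.coeff m ∧ ∀ m' ∈ p.support, monKey m ≤ monKey m'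

/-- `MLForm f F₁ F₂` : `F₁ / F₂` is the multilinear form of `f`: `F₁, F₂` are coprime
multilinear polynomials, `F₂` is monic, and `f = F₁ / F₂`. -/
def MLForm (f : K) (F₁ F₂ : P) : Prop :=
  Multilinear F₁ ∧ Multilinear F₂ ∧ IsRelPrime F₁ F₂ ∧ F₂ ≠ 0 ∧ MonicML F₂ ∧
    f = toK F₁ / toK F₂

/-- A monic arithmetic expression: the numerator of its multilinear form is monic as well. -/
def MonicAE (f : K) : Prop := ∃ F₁ F₂ : P, MLForm f F₁ F₂ ∧ MonicML F₁

/-- The isomorphism class of `f`. -/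
def classOf (f : K) : Set K := {g | Iso f g}

/-- `S̄` : the set of isomorphism classes of elements of `S`. -/
def classes (S : Set K) : Set (Set K) := classOf '' S

/-- `|S̄|` : the number of isomorphism classes of elements of `S`. -/
def countClasses (S : Set K) : ℕ := (classes S).ncard

/-- The number of isomorphism classes of elements of `S` depending on exactly `k` variables. -/
def gradeCount (S : Set K) (k : ℕ) : ℕ := countClasses {f ∈ S | (Vars f).ncard = k}

/-- `ω_n` for a graded family having `N k` elements in grade `k` : the sum over all
partitions `(k₁^{m₁},…,k_s^{m_s})` of `n` of `∏ⱼ C(N kⱼ + mⱼ - 1, mⱼ)`. -/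
def omega (N : ℕ → ℕ) (n : ℕ) : ℕ :=
  ∑ p : n.Partition,
    ∏ k ∈ p.parts.toFinset, Nat.choose (N k + p.parts.count k - 1) (p.parts.count k)

/-- `ω_n′` : the same sum restricted to non-trivial partitions, i.e. `ω_n - N n`. -/
def omega' (N : ℕ → ℕ) (n : ℕ) : ℕ := omega N n - N n

/-- `𝒜(s)` : arithmetic expressions ending with one of the operators in `s`. -/
def Aset (s : Set Op) : Set K := {f | IsAE f ∧ EndsIn f s}

/-- `ℱ(s)` : first-type arithmetic expressions ending with one of the operators in `s`. -/
def Fset (s : Set Op) : Set K := {f | FirstType f ∧ EndsIn f s}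

/-- `ℬ(s)` : second-type arithmetic expressions ending with one of the operators in `s`. -/
def Bset (s : Set Op) : Set K := {f | SecondType f ∧ EndsIn f s}

/-- `𝒞(s)` : third-type arithmetic expressions ending with one of the operators in `s`. -/
def Cset (s : Set Op) : Set K := {f | ThirdType f ∧ EndsIn f s}

/-- `ℳℬ(s)` : monic second-type arithmetic expressions ending with an operator in `s`. -/
def MBset (s : Set Op) : Set K := {f | SecondType f ∧ MonicAE f ∧ EndsIn f s}



lemma toK_inj : Function.Injective toK := IsFractionRing.injective P K

lemma toK_ne {p : P} (h : p ≠ 0) : toK p ≠ 0 := by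
  intro h'; exact h (toK_inj (by simpa using h'))

lemma exists_red (f : K) : ∃ p q : P, q ≠ 0 ∧ IsRelPrime p q ∧ f = toK p / toK q := by
  obtain ⟨a, b, h, hf⟩ := IsFractionRing.exists_reduced_fraction (A := P) f
  refine ⟨a, b, nonZeroDivisors.coe_ne_zero b, h, ?_⟩
  rw [← hf, IsFractionRing.mk'_eq_div]; rfl

/-- The partial derivative on `K`. -/
def D (i : ℕ) (f : K) : K :=
  (toK (pderiv i (exists_red f).choose) * toK (exists_red f).choose_spec.choose -
    toK (exists_red f).choose * toK (pderiv i (exists_red f).choose_spec.choose)) /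
    toK (exists_red f).choose_spec.choose ^ 2

lemma D_eq (i : ℕ) (f : K) (p q : P) (hq : q ≠ 0) (hf : f = toK p / toK q) :
    D i f = (toK (pderiv i p) * toK q - toK p * toK (pderiv i q)) / toK q ^ 2 := by
  unfold D
  obtain ⟨hb, -, hf'⟩ := (exists_red f).choose_spec.choose_spec
  generalize (exists_red f).choose_spec.choose = b at *
  generalize (exists_red f).choose = a at *
  have h1 : toK p * toK b = toK a * toK q := by
    have := hf.symm.trans hf'
    rwa [div_eq_div_iff (toK_ne hq) (toK_ne hb)] at this
  have h2 : p * b = a * q := toK_inj (by simpa using h1)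
  have h3 := congrArg (fun x => toK (pderiv i x)) h2
  simp only [pderiv_mul, map_add, map_mul] at h3
  have e1 := toK_ne hq
  have e2 := toK_ne hb
  rw [div_eq_div_iff (by positivity) (by positivity)]
  linear_combination (-toK q * toK b) * h3 +
    (toK q * toK (pderiv i b) + toK b * toK (pderiv i q)) * h1

lemma D_toK (i : ℕ) (p : P) : D i (toK p) = toK (pderiv i p) := by
  rw [D_eq i _ p 1 one_ne_zero (by simp)]; simp

lemma D_add (i : ℕ) (f g : K) : D i (f + g) = D i f + D i g := by
  obtain ⟨p, q, hq, -, hf⟩ := exists_red f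
  obtain ⟨a, b, hb, -, hg⟩ := exists_red g
  have e1 := toK_ne hq
  have e2 := toK_ne hb
  rw [D_eq i f p q hq hf, D_eq i g a b hb hg, D_eq i (f + g) (p * b + q * a) (q * b)
    (mul_ne_zero hq hb) (by rw [hf, hg]; simp; field_simp)]
  simp only [pderiv_mul, map_add, map_mul]
  field_simp
  ring

lemma D_mul (i : ℕ) (f g : K) : D i (f * g) = D i f * g + f * D i g := by
  obtain ⟨p, q, hq, -, hf⟩ := exists_red f
  obtain ⟨a, b, hb, -, hg⟩ := exists_red g
  have e1 := toK_ne hq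
  have e2 := toK_ne hb
  rw [D_eq i f p q hq hf, D_eq i g a b hb hg, D_eq i (f * g) (p * a) (q * b)
    (mul_ne_zero hq hb) (by rw [hf, hg]; simp; field_simp), hf, hg]
  simp only [pderiv_mul, map_add, map_mul]
  field_simp
  ring

lemma D_const (i : ℕ) (c : ℝ) : D i (toK (C c)) = 0 := by
  rw [D_toK]; simp

lemma D_zero (i : ℕ) : D i 0 = 0 := by simpa using D_const i 0
lemma D_one (i : ℕ) : D i 1 = 0 := by simpa using D_const i 1

lemma D_neg (i : ℕ) (f : K) : D i (-f) = - D i f := by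
  have := D_add i f (-f)
  rw [add_neg_cancel, D_zero] at this
  linear_combination -this

lemma D_sub (i : ℕ) (f g : K) : D i (f - g) = D i f - D i g := by
  rw [sub_eq_add_neg, D_add, D_neg, sub_eq_add_neg]

lemma D_inv (i : ℕ) (f : K) : D i f⁻¹ = - D i f / f ^ 2 := by
  by_cases hf : f = 0
  · simp [hf, D_zero]
  have := D_mul i f f⁻¹
  rw [mul_inv_cancel₀ hf, D_one] at this
  field_simp
  field_simp at this
  linear_combination -this

lemma pderiv_comm' (i j : ℕ) (p : P) : pderiv i (pderiv j p) = pderiv j (pderiv i p) := by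
  have h : ⁅(pderiv i : Derivation ℝ P P), (pderiv j : Derivation ℝ P P)⁆ = 0 := by
    apply MvPolynomial.derivation_ext
    intro k
    rw [Derivation.commutator_apply]
    simp only [pderiv_X, Pi.single_apply]
    split_ifs <;> simp
  have := congrArg (fun d => d p) h
  simp only [Derivation.commutator_apply, Derivation.zero_apply] at this
  exact sub_eq_zero.1 this

lemma D_comm (i j : ℕ) (f : K) : D i (D j f) = D j (D i f) := by
  obtain ⟨p, q, hq, -, hf⟩ := exists_red f
  have e1 := toK_ne hq
  have h : f * toK q = toK p := by rw [hf]; field_simp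
  have hp : pderiv i (pderiv j p) = pderiv j (pderiv i p) := pderiv_comm' i j p
  have hq' : pderiv i (pderiv j q) = pderiv j (pderiv i q) := pderiv_comm' i j q
  have h1 := congrArg (fun x => D i (D j x)) h
  have h2 := congrArg (fun x => D j (D i x)) h
  simp only [D_mul, D_add, D_toK, hp, hq'] at h1 h2
  have : (D i (D j f) - D j (D i f)) * toK q = 0 := by linear_combination h1 - h2
  rcases mul_eq_zero.1 this with h | h
  · linear_combination h
  · exact absurd h e1

lemma D_Xv (i j : ℕ) : D i (Xv j) = if i = j then 1 else 0 := by
  unfold Xv; rw [D_toK]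
  split_ifs with h
  · subst h; simp
  · rw [pderiv_X_of_ne (Ne.symm h)]; simp

lemma pderiv_zero_vars {i : ℕ} {p : P} (h : pderiv i p = 0) : i ∉ p.vars := by
  intro hi
  obtain ⟨m, hm, hmi⟩ := (mem_vars_iff_mem_support i).1 hi
  have h1 := coeff_pderiv (i := i) p (m - Finsupp.single i 1)
  rw [h] at h1
  have h2 : m - Finsupp.single i 1 + Finsupp.single i 1 = m := by
    apply tsub_add_cancel_of_le
    rw [Finsupp.single_le_iff]
    have := Finsupp.mem_support_iff.1 hmi
    omega
  rw [h2] at h1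
  have h3 : coeff m p ≠ 0 := mem_support_iff.1 hm
  have h4 : (((m - Finsupp.single i 1 : ℕ →₀ ℕ) i : ℕ) : ℝ) + 1 ≠ 0 := by positivity
  rw [coeff_zero] at h1
  exact mul_ne_zero h3 h4 h1.symm

lemma dvd_pderiv {i : ℕ} {q : P} (h : q ∣ pderiv i q) : pderiv i q = 0 := by
  by_contra h0
  obtain ⟨r, hr⟩ := h
  have hq : q ≠ 0 := by rintro rfl; simp at h0
  have hr0 : r ≠ 0 := by rintro rfl; simp at hr; exact h0 hr
  have h1 : degreeOf i (pderiv i q) = degreeOf i q + degreeOf i r := by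
    rw [hr, degreeOf_mul_eq hq hr0]
  have hpos : 0 < degreeOf i q := by
    by_contra hc
    apply h0
    apply pderiv_eq_zero_of_notMem_vars
    intro hi
    obtain ⟨m, hm, hmi⟩ := (mem_vars_iff_mem_support i).1 hi
    have := degreeOf_le_iff.1 (show degreeOf i q ≤ 0 by omega) m hm
    exact Finsupp.mem_support_iff.1 hmi (by omega)
  have h2 : degreeOf i (pderiv i q) < degreeOf i q := by
    rw [degreeOf_lt_iff hpos]
    intro m hm
    rw [mem_support_iff, coeff_pderiv] at hm
    have h3 : m + Finsupp.single i 1 ∈ q.support := mem_support_iff.2 (left_ne_zero_of_mul hm)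
    have := degreeOf_le_iff.1 (le_refl (degreeOf i q)) _ h3
    simp at this
    omega
  omega

lemma mem_Vars_iff (i : ℕ) (f : K) : i ∈ Vars f ↔ D i f ≠ 0 := by
  have key : ∀ p q : P, q ≠ 0 → IsRelPrime p q → f = toK p / toK q →
      ((i ∈ p.vars ∨ i ∈ q.vars) ↔ D i f ≠ 0) := by
    intro p q hq hpq hf
    have e1 := toK_ne hq
    rw [D_eq i f p q hq hf]
    constructor
    · intro h h0
      rw [div_eq_zero_iff, or_iff_left (by positivity), ← map_mul, ← map_mul, ← map_sub] at h0
      have h1 : pderiv i p * q - p * pderiv i q = 0 := toK_inj (by simpa using h0)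
      have h2 : q ∣ p * pderiv i q := ⟨pderiv i p, by linear_combination -h1⟩
      have h3 := dvd_pderiv (hpq.symm.dvd_of_dvd_mul_left h2)
      rw [h3, mul_zero, sub_zero, mul_eq_zero, or_iff_left hq] at h1
      rcases h with h | h
      · exact pderiv_zero_vars h1 h
      · exact pderiv_zero_vars h3 h
    · intro h
      by_contra h'
      push Not at h'
      rw [pderiv_eq_zero_of_notMem_vars h'.1, pderiv_eq_zero_of_notMem_vars h'.2] at h
      simp at h
  constructor
  · rintro ⟨p, q, hq, hpq, hf, h⟩
    exact (key p q hq hpq hf).1 h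
  · intro h
    obtain ⟨p, q, hq, hpq, hf⟩ := exists_red f
    exact ⟨p, q, hq, hpq, hf, (key p q hq hpq hf).2 h⟩

lemma const_of_D (f : K) (h : ∀ i, D i f = 0) : ∃ c : ℝ, f = toK (C c) := by
  obtain ⟨p, q, hq, hpq, hf⟩ := exists_red f
  have hp : ∀ i, i ∉ p.vars := fun i hi =>
    (mem_Vars_iff i f).1 ⟨p, q, hq, hpq, hf, Or.inl hi⟩ (h i)
  have hq' : ∀ i, i ∉ q.vars := fun i hi =>
    (mem_Vars_iff i f).1 ⟨p, q, hq, hpq, hf, Or.inr hi⟩ (h i)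
  have hp1 : p.vars = ∅ := Finset.eq_empty_of_forall_notMem hp
  have hq1 : q.vars = ∅ := Finset.eq_empty_of_forall_notMem hq'
  obtain ⟨a, ha⟩ : ∃ a, p = C a := ⟨_, vars_eq_empty_iff_eq_C.1 hp1⟩
  obtain ⟨b, hb⟩ : ∃ b, q = C b := ⟨_, vars_eq_empty_iff_eq_C.1 hq1⟩
  have hb0 : b ≠ 0 := by rintro rfl; simp at hb; exact hq hb
  refine ⟨a / b, ?_⟩
  rw [hf, div_eq_iff (toK_ne hq), ha, hb, ← map_mul, ← map_mul, div_mul_cancel₀ _ hb0]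


lemma notMem_Vars_iff (i : ℕ) (f : K) : i ∉ Vars f ↔ D i f = 0 := by
  rw [mem_Vars_iff, not_not]

lemma Vars_neg (f : K) : Vars (-f) = Vars f := by
  ext i; simp [mem_Vars_iff, D_neg]

lemma Vars_inv (f : K) : Vars f⁻¹ = Vars f := by
  ext i
  by_cases hf : f = 0
  · simp [hf]
  · simp [mem_Vars_iff, D_inv, hf]

lemma Vars_add {f g : K} (h : Disjoint (Vars f) (Vars g)) : Vars (f + g) = Vars f ∪ Vars g := by
  ext i
  rw [Set.mem_union]
  have h1 : i ∈ Vars f → i ∉ Vars g := fun h1 h2 => Set.disjoint_left.1 h h1 h2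
  rw [notMem_Vars_iff] at h1
  simp only [mem_Vars_iff, D_add] at *
  by_cases h2 : D i f = 0
  · simp [h2]
  · simp [h2, h1 h2]

lemma Vars_sub {f g : K} (h : Disjoint (Vars f) (Vars g)) : Vars (f - g) = Vars f ∪ Vars g := by
  rw [sub_eq_add_neg, Vars_add (by rwa [Vars_neg]), Vars_neg]

lemma Vars_mul {f g : K} (h : Disjoint (Vars f) (Vars g)) (hf : f ≠ 0) (hg : g ≠ 0) :
    Vars (f * g) = Vars f ∪ Vars g := by
  ext i
  rw [Set.mem_union]
  have h1 : i ∈ Vars f → i ∉ Vars g := fun h1 h2 => Set.disjoint_left.1 h h1 h2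
  rw [notMem_Vars_iff] at h1
  simp only [mem_Vars_iff, D_mul] at *
  by_cases h2 : D i f = 0
  · simp [h2, hf]
  · simp [h2, h1 h2, hg]

lemma Vars_div {f g : K} (h : Disjoint (Vars f) (Vars g)) (hf : f ≠ 0) (hg : g ≠ 0) :
    Vars (f / g) = Vars f ∪ Vars g := by
  rw [div_eq_mul_inv, Vars_mul (by rwa [Vars_inv]) hf (inv_ne_zero hg), Vars_inv]

lemma Vars_Xv (i : ℕ) : Vars (Xv i) = {i} := by
  ext j; simp [mem_Vars_iff, D_Xv]

lemma ne_zero_of_Vars {f : K} (h : (Vars f).Nonempty) : f ≠ 0 := by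
  rintro rfl
  obtain ⟨i, hi⟩ := h
  exact (mem_Vars_iff i 0).1 hi (D_zero i)

lemma Xv_ne (i : ℕ) : Xv i ≠ 0 := ne_zero_of_Vars (by simp [Vars_Xv])

lemma IsAE.nonempty {f : K} (h : IsAE f) : (Vars f).Nonempty := by
  induction h with
  | var i => simp [Vars_Xv]
  | add _ _ d ih1 _ => rw [Vars_add d]; exact ih1.inl
  | sub _ _ d ih1 _ => rw [Vars_sub d]; exact ih1.inl
  | mul _ _ d ih1 ih2 =>
    rw [Vars_mul d (ne_zero_of_Vars ih1) (ne_zero_of_Vars ih2)]; exact ih1.inl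
  | div _ _ d ih1 ih2 =>
    rw [Vars_div d (ne_zero_of_Vars ih1) (ne_zero_of_Vars ih2)]; exact ih1.inl

lemma IsAE.ne_zero {f : K} (h : IsAE f) : f ≠ 0 := ne_zero_of_Vars h.nonempty

lemma IsAE.Vars_mul {f g : K} (hf : IsAE f) (hg : IsAE g) (h : Disjoint (Vars f) (Vars g)) :
    Vars (f * g) = Vars f ∪ Vars g := _root_.Vars_mul h hf.ne_zero hg.ne_zero

lemma IsAE.Vars_div {f g : K} (hf : IsAE f) (hg : IsAE g) (h : Disjoint (Vars f) (Vars g)) :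
    Vars (f / g) = Vars f ∪ Vars g := _root_.Vars_div h hf.ne_zero hg.ne_zero

lemma IsAE.finite {f : K} (h : IsAE f) : (Vars f).Finite := by
  induction h with
  | var i => simp [Vars_Xv]
  | add _ _ d ih1 ih2 => rw [Vars_add d]; exact ih1.union ih2
  | sub _ _ d ih1 ih2 => rw [Vars_sub d]; exact ih1.union ih2
  | mul h1 h2 d ih1 ih2 => rw [h1.Vars_mul h2 d]; exact ih1.union ih2
  | div h1 h2 d ih1 ih2 => rw [h1.Vars_div h2 d]; exact ih1.union ih2

/-- An arithmetic expression is a variable, or splits into two with disjoint variables. -/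
lemma IsAE.cases_vars {f : K} (h : IsAE f) : (∃ i, f = Xv i) ∨
    ∃ g h o, IsAE g ∧ IsAE h ∧ Disjoint (Vars g) (Vars h) ∧ Vars f = Vars g ∪ Vars h ∧
      f = applyOp o g h := by
  cases h with
  | var i => exact Or.inl ⟨i, rfl⟩
  | add h1 h2 d => exact Or.inr ⟨_, _, Op.add, h1, h2, d, Vars_add d, rfl⟩
  | sub h1 h2 d => exact Or.inr ⟨_, _, Op.sub, h1, h2, d, Vars_sub d, rfl⟩
  | mul h1 h2 d => exact Or.inr ⟨_, _, Op.mul, h1, h2, d, h1.Vars_mul h2 d, rfl⟩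
  | div h1 h2 d => exact Or.inr ⟨_, _, Op.div, h1, h2, d, h1.Vars_div h2 d, rfl⟩

lemma IsAE.one_le {f : K} (h : IsAE f) : 1 ≤ (Vars f).ncard :=
  (Set.ncard_pos h.finite).2 h.nonempty

lemma ncard_union_ae {g h : K} (hg : IsAE g) (hh : IsAE h) (d : Disjoint (Vars g) (Vars h)) :
    (Vars g ∪ Vars h).ncard = (Vars g).ncard + (Vars h).ncard :=
  Set.ncard_union_eq d hg.finite hh.finite

lemma IsAE.eq_Xv {f : K} (h : IsAE f) (h1 : (Vars f).ncard = 1) : ∃ i, f = Xv i := by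
  rcases h.cases_vars with h | ⟨a, b, o, ha, hb, d, hv, -⟩
  · exact h
  · have := ncard_union_ae ha hb d
    have := ha.one_le
    have := hb.one_le
    rw [← hv] at *
    omega

lemma Xv_inj {i j : ℕ} (h : Xv i = Xv j) : i = j := by
  have := congrArg Vars h
  simpa [Vars_Xv] using this

lemma firstType_Xv (i : ℕ) : FirstType (Xv i) := by
  refine ⟨.var i, fun h => ?_⟩
  obtain ⟨j, hj⟩ := h.eq_Xv (by simp [Vars_neg, Vars_Xv])
  have h1 := congrArg Vars hj
  rw [Vars_neg, Vars_Xv, Vars_Xv, Set.singleton_eq_singleton_iff] at h1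
  subst h1
  exact Xv_ne i (by linear_combination (-1/2 : K) * hj)

lemma disj_ne {i j : ℕ} (h : Disjoint (Vars (Xv i)) (Vars (Xv j))) : i ≠ j := by
  simpa [Vars_Xv] using h

lemma disj_Xv {i j : ℕ} (h : i ≠ j) : Disjoint (Vars (Xv i)) (Vars (Xv j)) := by
  simpa [Vars_Xv] using h

lemma EndsWith.isAE {f : K} {o : Op} (h : EndsWith f o) : IsAE f := by
  cases h with
  | var i => exact .var i
  | add_base h => exact .add (.var _) (.var _) (disj_Xv h)
  | sub_base h => exact .sub (.var _) (.var _) (disj_Xv h)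
  | mul_base h => exact .mul (.var _) (.var _) (disj_Xv h)
  | div_base h => exact .div (.var _) (.var _) (disj_Xv h)
  | add_rec h1 h2 d => exact .add h1 h2 d
  | mul_rec h1 h2 d => exact .mul h1 h2 d
  | div_rec h1 h2 d => exact .div h1 h2 d
  | sub_rec h1 h2 d => exact .sub h1 h2 d

/-! Leading coefficients. -/

/-- A monomial order on `ℕ →₀ ℕ`. -/
def mo : MonomialOrder ℕ where
  syn := (MonomialOrder.lex (σ := ℕᵒᵈ)).syn
  toSyn := (Finsupp.domCongr OrderDual.toDual : (ℕ →₀ ℕ) ≃+ (ℕᵒᵈ →₀ ℕ)).trans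
    (MonomialOrder.lex (σ := ℕᵒᵈ)).toSyn
  toSyn_monotone := by
    intro a b h
    apply (MonomialOrder.lex (σ := ℕᵒᵈ)).toSyn_monotone
    intro i
    exact h (OrderDual.ofDual i)

/-- Leading data. -/
def Lead (f : K) : Prop := ∃ p q : P, p ≠ 0 ∧ q ≠ 0 ∧ f = toK p / toK q ∧
  (∀ i ∈ p.vars, i ∈ Vars f) ∧ (∀ i ∈ q.vars, i ∈ Vars f) ∧ mo.degree p ≠ mo.degree q ∧
  (mo.leadingCoeff p = mo.leadingCoeff q ∨ mo.leadingCoeff p = - mo.leadingCoeff q)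

lemma deg_zero_of {p : P} (hp : p ≠ 0) {i : ℕ} (hi : i ∉ p.vars) : mo.degree p i = 0 := by
  by_contra h
  exact hi ((mem_vars_iff_mem_support i).2 ⟨_, mo.degree_mem_support hp, Finsupp.mem_support_iff.2 h⟩)

lemma lead_inv {f : K} (h : Lead f) : Lead f⁻¹ := by
  obtain ⟨p, q, hp, hq, hf, h1, h2, h3, h4⟩ := h
  refine ⟨q, p, hq, hp, by rw [hf, inv_div], by rwa [Vars_inv], by rwa [Vars_inv], h3.symm, ?_⟩
  rcases h4 with h4 | h4
  · exact Or.inl h4.symm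
  · exact Or.inr (by rw [h4, neg_neg])

lemma lead_neg {f : K} (h : Lead f) : Lead (-f) := by
  obtain ⟨p, q, hp, hq, hf, h1, h2, h3, h4⟩ := h
  have e1 : -p = C (-1) * p := by simp
  have hC : (C (-1) : P) ≠ 0 := by simp
  refine ⟨-p, q, neg_ne_zero.2 hp, hq, by rw [hf, map_neg, neg_div], ?_, by rwa [Vars_neg], ?_, ?_⟩
  · rw [Vars_neg]; simpa [vars_neg] using h1
  · rw [e1, mo.degree_mul hC hp, mo.degree_C, zero_add]; exact h3
  · rw [e1, mo.leadingCoeff_mul, mo.leadingCoeff_C]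
    rcases h4 with h4 | h4
    · right; rw [h4]; ring
    · left; rw [h4]; ring

lemma split_deg {f g : K} (d : Disjoint (Vars f) (Vars g)) {p q a b : P} (hp0 : p ≠ 0) (hq0 : q ≠ 0)
    (ha0 : a ≠ 0) (hb0 : b ≠ 0)
    (hp : ∀ i ∈ p.vars, i ∈ Vars f) (hq : ∀ i ∈ q.vars, i ∈ Vars f)
    (ha : ∀ i ∈ a.vars, i ∈ Vars g) (hb : ∀ i ∈ b.vars, i ∈ Vars g)
    (h : mo.degree p + mo.degree b = mo.degree q + mo.degree a) : mo.degree p = mo.degree q := by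
  ext i
  have h1 := DFunLike.congr_fun h i
  simp only [Finsupp.add_apply] at h1
  by_cases hi : i ∈ Vars f
  · have hi' : i ∉ Vars g := fun h2 => Set.disjoint_left.1 d hi h2
    rw [deg_zero_of hb0 (fun h => hi' (hb i h)), deg_zero_of ha0 (fun h => hi' (ha i h))] at h1
    exact h1
  · rw [deg_zero_of hp0 (fun h => hi (hp i h)), deg_zero_of hq0 (fun h => hi (hq i h))]

lemma lead_mul {f g : K} (hf : Lead f) (hg : Lead g) (d : Disjoint (Vars f) (Vars g)) :
    Lead (f * g) := by
  obtain ⟨p, q, hp0, hq0, hf, hp, hq, h3, h4⟩ := hf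
  obtain ⟨a, b, ha0, hb0, hg, ha, hb, h3', h4'⟩ := hg
  have hv : Vars (f * g) = Vars f ∪ Vars g := Vars_mul d
    (by rw [hf]; exact div_ne_zero (toK_ne hp0) (toK_ne hq0))
    (by rw [hg]; exact div_ne_zero (toK_ne ha0) (toK_ne hb0))
  refine ⟨p * a, q * b, mul_ne_zero hp0 ha0, mul_ne_zero hq0 hb0, ?_, ?_, ?_, ?_, ?_⟩
  · rw [hf, hg, map_mul, map_mul, div_mul_div_comm]
  · intro i hi
    rw [hv]
    rcases Finset.mem_union.1 (vars_mul _ _ hi) with h | h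
    · exact Or.inl (hp i h)
    · exact Or.inr (ha i h)
  · intro i hi
    rw [hv]
    rcases Finset.mem_union.1 (vars_mul _ _ hi) with h | h
    · exact Or.inl (hq i h)
    · exact Or.inr (hb i h)
  · rw [mo.degree_mul hp0 ha0, mo.degree_mul hq0 hb0]
    intro h
    exact h3 (split_deg d hp0 hq0 hb0 ha0 hp hq hb ha h)
  · rw [mo.leadingCoeff_mul, mo.leadingCoeff_mul]
    rcases h4 with h4 | h4 <;> rcases h4' with h4' | h4' <;> rw [h4, h4'] <;> simp

lemma lead_add {f g : K} (hf : Lead f) (hg : Lead g) (d : Disjoint (Vars f) (Vars g)) :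
    Lead (f + g) := by
  obtain ⟨p, q, hp0, hq0, hf, hp, hq, h3, h4⟩ := hf
  obtain ⟨a, b, ha0, hb0, hg, ha, hb, h3', h4'⟩ := hg
  have hv : Vars (f + g) = Vars f ∪ Vars g := Vars_add d
  have hne : mo.degree (p * b) ≠ mo.degree (q * a) := by
    rw [mo.degree_mul hp0 hb0, mo.degree_mul hq0 ha0]
    intro h
    exact h3 (split_deg d hp0 hq0 ha0 hb0 hp hq ha hb h)
  have hsum : (mo.degree (p * b + q * a) = mo.degree (p * b) ∧
        mo.leadingCoeff (p * b + q * a) = mo.leadingCoeff (p * b)) ∨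
      (mo.degree (p * b + q * a) = mo.degree (q * a) ∧
        mo.leadingCoeff (p * b + q * a) = mo.leadingCoeff (q * a)) := by
    rcases lt_or_gt_of_ne (fun h => hne (mo.toSyn.injective h)) with h | h
    · right
      rw [add_comm]
      exact ⟨mo.degree_add_of_lt h, mo.leadingCoeff_add_of_lt h⟩
    · left
      exact ⟨mo.degree_add_of_lt h, mo.leadingCoeff_add_of_lt h⟩
  have hlc : mo.leadingCoeff (p * b + q * a) ≠ 0 := by
    rcases hsum with ⟨-, h⟩ | ⟨-, h⟩ <;> rw [h, mo.leadingCoeff_ne_zero_iff]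
    · exact mul_ne_zero hp0 hb0
    · exact mul_ne_zero hq0 ha0
  refine ⟨p * b + q * a, q * b, mo.leadingCoeff_ne_zero_iff.1 hlc, mul_ne_zero hq0 hb0, ?_, ?_, ?_, ?_, ?_⟩
  · rw [hf, hg, map_add, map_mul, map_mul, map_mul, div_add_div _ _ (toK_ne hq0) (toK_ne hb0)]
  · intro i hi
    rw [hv]
    rcases Finset.mem_union.1 (vars_add_subset _ _ hi) with h | h <;>
    rcases Finset.mem_union.1 (vars_mul _ _ h) with h | h
    · exact Or.inl (hp i h)
    · exact Or.inr (hb i h)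
    · exact Or.inl (hq i h)
    · exact Or.inr (ha i h)
  · intro i hi
    rw [hv]
    rcases Finset.mem_union.1 (vars_mul _ _ hi) with h | h
    · exact Or.inl (hq i h)
    · exact Or.inr (hb i h)
  · rcases hsum with ⟨h, -⟩ | ⟨h, -⟩
    · rw [h, mo.degree_mul hp0 hb0, mo.degree_mul hq0 hb0]
      intro h; exact h3 (add_right_cancel h)
    · rw [h, mo.degree_mul hq0 ha0, mo.degree_mul hq0 hb0]
      intro h; exact h3' (add_left_cancel h)
  · rcases hsum with ⟨-, h⟩ | ⟨-, h⟩ <;> rw [h, mo.leadingCoeff_mul, mo.leadingCoeff_mul]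
    · rcases h4 with h4 | h4 <;> rw [h4] <;> simp
    · rcases h4' with h4 | h4 <;> rw [h4] <;> simp

lemma IsAE.lead {f : K} (h : IsAE f) : Lead f := by
  induction h with
  | var i =>
    refine ⟨X i, 1, X_ne_zero i, one_ne_zero, by simp [Xv], ?_, by simp, ?_, ?_⟩
    · simp [Vars_Xv]
    · rw [mo.degree_X, mo.degree_one]; simp
    · left; rw [mo.leadingCoeff_X, mo.leadingCoeff_one]
  | add _ _ d h1 h2 => exact lead_add h1 h2 d
  | sub _ _ d h1 h2 =>
    rw [sub_eq_add_neg]; exact lead_add h1 (lead_neg h2) (by rwa [Vars_neg])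
  | mul _ _ d h1 h2 => exact lead_mul h1 h2 d
  | div _ _ d h1 h2 =>
    rw [div_eq_mul_inv]; exact lead_mul h1 (lead_inv h2) (by rwa [Vars_inv])

lemma const_pm_one {f g : K} (hf : IsAE f) (hg : IsAE g) {c : ℝ} (h : f = toK (C c) * g) :
    f = g ∨ f = -g := by
  obtain ⟨p, q, hp0, hq0, hf, -, -, -, h4⟩ := hf.lead
  obtain ⟨a, b, ha0, hb0, hg, -, -, -, h4'⟩ := hg.lead
  have h1 : p * b = C c * a * q := by
    apply toK_inj
    have e1 := toK_ne hq0
    have e2 := toK_ne hb0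
    rw [hf, hg] at h
    field_simp at h
    simp only [map_mul]
    linear_combination h
  have h2 := congrArg mo.leadingCoeff h1
  simp only [mo.leadingCoeff_mul, mo.leadingCoeff_C] at h2
  have f1 := mo.leadingCoeff_ne_zero_iff.2 hq0
  have f2 := mo.leadingCoeff_ne_zero_iff.2 hb0
  have f3 : mo.leadingCoeff q * mo.leadingCoeff b ≠ 0 := mul_ne_zero f1 f2
  have hc : c = 1 ∨ c = -1 := by
    rcases h4 with h4 | h4 <;> rcases h4' with h4' | h4' <;> rw [h4, h4'] at h2
    · left; apply mul_right_cancel₀ f3; linear_combination -h2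
    · right; apply mul_right_cancel₀ f3; linear_combination h2
    · right; apply mul_right_cancel₀ f3; linear_combination -h2
    · left; apply mul_right_cancel₀ f3; linear_combination h2
  rcases hc with rfl | rfl
  · left; simpa using h
  · right; simpa using h


lemma permAct_toK (σ : Equiv.Perm ℕ) (p : P) : permAct σ (toK p) = toK (rename σ p) := by
  unfold permAct toK
  rw [IsFractionRing.ringEquivOfRingEquiv_algebraMap]
  rfl

lemma permAct_Xv (σ : Equiv.Perm ℕ) (i : ℕ) : permAct σ (Xv i) = Xv (σ i) := by
  unfold Xv; rw [permAct_toK, rename_X]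

lemma permAct_mul (σ τ : Equiv.Perm ℕ) (f : K) :
    permAct σ (permAct τ f) = permAct (σ * τ) f := by
  obtain ⟨p, q, hq, -, rfl⟩ := exists_red f
  simp only [map_div₀, permAct_toK, rename_rename]
  rfl

lemma permAct_one (f : K) : permAct 1 f = f := by
  obtain ⟨p, q, hq, -, rfl⟩ := exists_red f
  simp only [map_div₀, permAct_toK, Equiv.Perm.coe_one, rename_id_apply]

lemma permAct_inv_self (σ : Equiv.Perm ℕ) (f : K) : permAct σ⁻¹ (permAct σ f) = f := by
  rw [permAct_mul, inv_mul_cancel, permAct_one]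

lemma D_permAct (σ : Equiv.Perm ℕ) (i : ℕ) (f : K) :
    D (σ i) (permAct σ f) = permAct σ (D i f) := by
  obtain ⟨p, q, hq, -, hf⟩ := exists_red f
  rw [D_eq i f p q hq hf, D_eq (σ i) (permAct σ f) (rename σ p) (rename σ q)
    (by rw [Ne, ← map_zero (rename σ)]; exact fun h => hq (rename_injective _ σ.injective h))
    (by rw [hf]; simp only [map_div₀, permAct_toK])]
  simp only [map_div₀, map_sub, map_mul, map_pow, permAct_toK, pderiv_rename σ.injective]

lemma Vars_permAct (σ : Equiv.Perm ℕ) (f : K) : Vars (permAct σ f) = σ '' Vars f := by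
  ext i
  obtain ⟨j, rfl⟩ := σ.surjective i
  rw [σ.injective.mem_set_image, mem_Vars_iff, mem_Vars_iff, D_permAct, Ne, map_eq_zero_iff]
  exact (permAct σ).injective

lemma disj_permAct (σ : Equiv.Perm ℕ) {f g : K} (d : Disjoint (Vars f) (Vars g)) :
    Disjoint (Vars (permAct σ f)) (Vars (permAct σ g)) := by
  rw [Vars_permAct, Vars_permAct]
  exact (Set.disjoint_image_iff σ.injective).2 d

lemma IsAE.permAct {f : K} (h : IsAE f) (σ : Equiv.Perm ℕ) : IsAE (permAct σ f) := by
  induction h with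
  | var i => rw [permAct_Xv]; exact .var _
  | add _ _ d h1 h2 => rw [map_add]; exact .add h1 h2 (disj_permAct σ d)
  | sub _ _ d h1 h2 => rw [map_sub]; exact .sub h1 h2 (disj_permAct σ d)
  | mul _ _ d h1 h2 => rw [map_mul]; exact .mul h1 h2 (disj_permAct σ d)
  | div _ _ d h1 h2 => rw [map_div₀]; exact .div h1 h2 (disj_permAct σ d)

lemma FirstType.permAct {f : K} (h : FirstType f) (σ : Equiv.Perm ℕ) :
    FirstType (permAct σ f) := by
  refine ⟨h.1.permAct σ, fun h' => h.2 ?_⟩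
  have := h'.permAct σ⁻¹
  rwa [map_neg, permAct_inv_self] at this

lemma EndsWith.permAct {f : K} {o : Op} (h : EndsWith f o) (σ : Equiv.Perm ℕ) :
    EndsWith (permAct σ f) o := by
  have hc : ∀ g : K, (Vars (_root_.permAct σ g)).ncard = (Vars g).ncard := fun g => by
    rw [Vars_permAct, Set.ncard_image_of_injective _ σ.injective]
  induction h with
  | var i => rw [permAct_Xv]; exact .var _
  | add_base h => rw [map_add, permAct_Xv, permAct_Xv]; exact .add_base (σ.injective.ne h)
  | sub_base h => rw [map_sub, permAct_Xv, permAct_Xv]; exact .sub_base (σ.injective.ne h)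
  | mul_base h => rw [map_mul, permAct_Xv, permAct_Xv]; exact .mul_base (σ.injective.ne h)
  | div_base h => rw [map_div₀, permAct_Xv, permAct_Xv]; exact .div_base (σ.injective.ne h)
  | add_rec h1 h2 d c o1 o2 _ _ e1 e2 =>
    rw [map_add]
    exact .add_rec (h1.permAct σ) (h2.permAct σ) (disj_permAct σ d)
      (by rwa [← map_add, hc]) o1 o2 e1 e2
  | mul_rec h1 h2 d c o1 o2 _ _ e1 e2 =>
    rw [map_mul]
    exact .mul_rec (h1.permAct σ) (h2.permAct σ) (disj_permAct σ d)
      (by rwa [← map_mul, hc]) o1 o2 e1 e2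
  | div_rec h1 h2 d c o1 o2 _ _ e1 e2 =>
    rw [map_div₀]
    exact .div_rec (h1.permAct σ) (h2.permAct σ) (disj_permAct σ d)
      (by rwa [← map_div₀, hc]) o1 o2 e1 e2
  | sub_rec h1 h2 d c o1 o2 ft _ _ e1 e2 =>
    rw [map_sub]
    exact .sub_rec (h1.permAct σ) (h2.permAct σ) (disj_permAct σ d)
      (by rwa [← map_sub, hc]) o1 o2 (ft.permAct σ) e1 e2

lemma Iso.refl (f : K) : Iso f f := ⟨1, permAct_one f⟩
lemma Iso.symm {f g : K} (h : Iso f g) : Iso g f := by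
  obtain ⟨σ, rfl⟩ := h; exact ⟨σ⁻¹, permAct_inv_self σ f⟩
lemma Iso.trans {f g h : K} (h1 : Iso f g) (h2 : Iso g h) : Iso f h := by
  obtain ⟨σ, rfl⟩ := h1; obtain ⟨τ, rfl⟩ := h2; exact ⟨τ * σ, (permAct_mul τ σ f).symm⟩
lemma Iso.neg {f g : K} (h : Iso f g) : Iso (-f) (-g) := by
  obtain ⟨σ, rfl⟩ := h; exact ⟨σ, map_neg _ _⟩

lemma classOf_eq_iff {f g : K} : classOf f = classOf g ↔ Iso f g := by
  constructor
  · intro h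
    have : g ∈ classOf g := Iso.refl g
    rw [← h] at this; exact this
  · intro h
    ext x
    exact ⟨fun hx => h.symm.trans hx, fun hx => h.trans hx⟩

lemma Iso.ncard {f g : K} (h : Iso f g) : (Vars f).ncard = (Vars g).ncard := by
  obtain ⟨σ, rfl⟩ := h
  rw [Vars_permAct, Set.ncard_image_of_injective _ σ.injective]

lemma Iso.isAE {f g : K} (h : Iso f g) (hf : IsAE f) : IsAE g := by
  obtain ⟨σ, rfl⟩ := h; exact hf.permAct σ

lemma Iso.endsIn {f g : K} {s : Set Op} (h : Iso f g) (hf : EndsIn f s) : EndsIn g s := by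
  obtain ⟨σ, rfl⟩ := h
  obtain ⟨o, ho, hf⟩ := hf
  exact ⟨o, ho, hf.permAct σ⟩

lemma Iso.firstType {f g : K} (h : Iso f g) (hf : FirstType f) : FirstType g := by
  obtain ⟨σ, rfl⟩ := h; exact hf.permAct σ

lemma Iso.secondType {f g : K} (h : Iso f g) (hf : SecondType f) : SecondType g :=
  ⟨h.isAE hf.1, h.neg.isAE hf.2.1, fun h' => hf.2.2 ((h.trans h').trans h.neg.symm)⟩

lemma Iso.thirdType {f g : K} (h : Iso f g) (hf : ThirdType f) : ThirdType g :=
  ⟨h.isAE hf.1, h.neg.isAE hf.2.1, (h.symm.trans hf.2.2).trans h.neg⟩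

lemma agree_permAct (σ τ : Equiv.Perm ℕ) (f : K) (h : ∀ i ∈ Vars f, σ i = τ i) :
    permAct σ f = permAct τ f := by
  obtain ⟨p, q, hq, hpq, hf⟩ := exists_red f
  have e : ∀ r : P, (∀ i ∈ r.vars, i ∈ Vars f) → rename σ r = rename τ r := by
    intro r hr
    refine hom_congr_vars (f₁ := (rename σ : P →ₐ[ℝ] P).toRingHom)
      (f₂ := (rename τ : P →ₐ[ℝ] P).toRingHom) ?_ ?_ rfl
    · ext a; simp
    · intro i hi _
      simp [h i (hr i hi)]
  rw [hf]
  simp only [map_div₀, permAct_toK]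
  rw [e p (fun i hi => ⟨p, q, hq, hpq, hf, Or.inl hi⟩),
    e q (fun i hi => ⟨p, q, hq, hpq, hf, Or.inr hi⟩)]

/-- An injection on a finite set extends to a permutation. -/
lemma exists_perm_ext (f : ℕ → ℕ) (S : Set ℕ) (hS : S.Finite) (hf : Set.InjOn f S) :
    ∃ ρ : Equiv.Perm ℕ, ∀ i ∈ S, ρ i = f i := by
  classical
  have i1 : Infinite {x // ¬ x ∈ S} := Set.infinite_coe_iff.2 hS.infinite_compl
  have i2 : Infinite {x // ¬ x ∈ f '' S} := Set.infinite_coe_iff.2 (hS.image f).infinite_compl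
  obtain ⟨e2⟩ : Nonempty ({x // ¬ x ∈ S} ≃ {x // ¬ x ∈ f '' S}) := nonempty_equiv_of_countable
  let e1 : {x // x ∈ S} ≃ {x // x ∈ f '' S} := Equiv.Set.imageOfInjOn f S hf
  refine ⟨Equiv.subtypeCongr e1 e2, fun i hi => ?_⟩
  simp only [Equiv.subtypeCongr, Equiv.trans_apply]
  rw [Equiv.sumCompl_symm_apply_of_pos hi]
  rfl

/-- Two bijections glue. -/
lemma exists_perm_glue (σ τ : Equiv.Perm ℕ) (S T : Set ℕ) (hS : S.Finite) (hT : T.Finite)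
    (d : Disjoint S T) (d' : Disjoint (σ '' S) (τ '' T)) :
    ∃ ρ : Equiv.Perm ℕ, (∀ i ∈ S, ρ i = σ i) ∧ ∀ i ∈ T, ρ i = τ i := by
  classical
  have dj := Set.disjoint_left.1 d
  have dj' := Set.disjoint_left.1 d'
  obtain ⟨ρ, h⟩ := exists_perm_ext (fun i => if i ∈ S then σ i else τ i) (S ∪ T) (hS.union hT) (by
    intro i hi j hj hij
    simp only at hij
    split_ifs at hij with h1 h2 h2
    · exact σ.injective hij
    · exact absurd (Set.mem_image_of_mem τ (hj.resolve_left h2))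
        (hij ▸ dj' (Set.mem_image_of_mem σ h1))
    · exact absurd (Set.mem_image_of_mem τ (hi.resolve_left h1))
        (hij ▸ dj' (Set.mem_image_of_mem σ h2))
    · exact τ.injective hij)
  refine ⟨ρ, fun i hi => ?_, fun i hi => ?_⟩
  · rw [h i (Or.inl hi), if_pos hi]
  · rw [h i (Or.inr hi), if_neg (fun h => dj h hi)]

lemma Iso.glue {g g' h h' : K} (hg : IsAE g) (hh : IsAE h) (d : Disjoint (Vars g) (Vars h))
    (d' : Disjoint (Vars g') (Vars h')) (h1 : Iso g g') (h2 : Iso h h') :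
    ∃ ρ : Equiv.Perm ℕ, permAct ρ g = g' ∧ permAct ρ h = h' := by
  obtain ⟨σ, rfl⟩ := h1
  obtain ⟨τ, rfl⟩ := h2
  rw [Vars_permAct, Vars_permAct] at d'
  obtain ⟨ρ, h1, h2⟩ := exists_perm_glue σ τ _ _ hg.finite hh.finite d d'
  exact ⟨ρ, agree_permAct _ _ _ h1, agree_permAct _ _ _ h2⟩


/-- `f = c * s` where `c` does not involve the variables of `s`. -/
def Block (f c s : K) : Prop := f = c * s ∧ c ≠ 0 ∧ ∀ k ∈ Vars s, D k c = 0

/-- The logarithmic mixed derivative (numerator). -/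
def M (k m : ℕ) (f : K) : K := f * D k (D m f) - D k f * D m f

lemma M_comm (k m : ℕ) (f : K) : M k m f = M m k f := by
  unfold M; rw [D_comm]; ring

lemma DD_inv (k m : ℕ) {f : K} (hf : f ≠ 0) :
    D k (D m f⁻¹) = (2 * D k f * D m f - f * D k (D m f)) / f ^ 3 := by
  rw [D_inv, neg_div, D_neg, div_eq_mul_inv, D_mul, D_inv, pow_two, D_mul]
  field_simp
  ring

lemma M_inv (k m : ℕ) {f : K} (hf : f ≠ 0) : M k m f⁻¹ = 0 ↔ M k m f = 0 := by
  have : M k m f⁻¹ = - M k m f / f ^ 4 := by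
    unfold M
    rw [DD_inv k m hf, D_inv, D_inv]
    field_simp
    ring
  rw [this, div_eq_zero_iff, neg_eq_zero, or_iff_left (by positivity)]

lemma Block.M_zero {f c s : K} (h : Block f c s) {k m : ℕ} (hk : k ∈ Vars s) (hm : m ∉ Vars s) :
    M k m f = 0 := by
  obtain ⟨rfl, -, h⟩ := h
  have h1 := h k hk
  have h2 := (notMem_Vars_iff _ _).1 hm
  have h3 : D k (D m c) = 0 := by rw [D_comm, h1, D_zero]
  unfold M
  simp only [D_mul, D_add, h1, h2, h3, D_zero]
  ring

/-- `f = c * (a + b)` -/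
def SBlock (f c a b : K) : Prop := Block f c (a + b) ∧ Disjoint (Vars a) (Vars b) ∧
  (Vars a).Nonempty ∧ (Vars b).Nonempty

lemma SBlock.swap {f c a b : K} (h : SBlock f c a b) : SBlock f c b a :=
  ⟨by rw [add_comm]; exact h.1, h.2.1.symm, h.2.2.2, h.2.2.1⟩

lemma SBlock.facts {f c a b : K} (h : SBlock f c a b) {k l : ℕ} (hk : k ∈ Vars a)
    (hl : l ∈ Vars b) : D k f ≠ 0 ∧ D l f ≠ 0 ∧ D k (D l f) = 0 := by
  obtain ⟨⟨rfl, hc, h⟩, d, -, -⟩ := h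
  have hv := Vars_add d
  have k1 := h k (by rw [hv]; exact Or.inl hk)
  have l1 := h l (by rw [hv]; exact Or.inr hl)
  have k2 := (notMem_Vars_iff _ _).1 (fun h => Set.disjoint_left.1 d hk h)
  have l2 := (notMem_Vars_iff _ _).1 (fun h => Set.disjoint_left.1 d h hl)
  have k3 := (mem_Vars_iff _ _).1 hk
  have l3 := (mem_Vars_iff _ _).1 hl
  have kl : D k (D l b) = 0 := by rw [D_comm, k2, D_zero]
  simp only [D_mul, D_add, k1, l1, k2, l2, kl, D_zero]
  simp [hc, k3, l3]

lemma SBlock.M_ne {f c a b : K} (h : SBlock f c a b) {k l : ℕ} (hk : k ∈ Vars a)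
    (hl : l ∈ Vars b) : M k l f ≠ 0 := by
  obtain ⟨h1, h2, h3⟩ := h.facts hk hl
  unfold M
  rw [h3]
  simp [h1, h2]

/-- Connectedness. -/
lemma SBlock.conn {f c a b : K} (h : SBlock f c a b) {W : Set ℕ}
    (hW : ∀ k ∈ W, ∀ m, m ∉ W → M k m f = 0) {i : ℕ} (hi : i ∈ Vars a) (hiW : i ∈ W) :
    Vars a ⊆ W ∧ Vars b ⊆ W := by
  have hb : Vars b ⊆ W := fun l hl => by
    by_contra hc
    exact h.M_ne hi hl (hW i hiW l hc)
  refine ⟨fun k hk => ?_, hb⟩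
  obtain ⟨l, hl⟩ := h.2.2.2
  by_contra hc
  exact h.M_ne hk hl (by rw [M_comm]; exact hW l (hb hl) k hc)

/-- `i` occurs in numerator position in `f`. -/
def NP (f : K) (i : ℕ) : Prop := (∃ c, Block f c (Xv i)) ∨ ∃ c a b, SBlock f c a b ∧ i ∈ Vars a

lemma NP_not_both {f : K} (hf : f ≠ 0) {i : ℕ} (h1 : NP f i) (h2 : NP f⁻¹ i) : False := by
  have aux : ∀ {f : K}, f ≠ 0 → (∃ c, Block f c (Xv i)) →
      (∃ c a b, SBlock f⁻¹ c a b ∧ i ∈ Vars a) → False := by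
    rintro f hf ⟨c, hc⟩ ⟨c', a, b, hs, hi⟩
    have hW : ∀ k ∈ ({i} : Set ℕ), ∀ m, m ∉ ({i} : Set ℕ) → M k m f⁻¹ = 0 := by
      intro k hk m hm
      rw [M_inv _ _ hf]
      exact hc.M_zero (by rwa [Vars_Xv]) (by rwa [Vars_Xv])
    obtain ⟨-, hb⟩ := hs.conn hW hi rfl
    obtain ⟨l, hl⟩ := hs.2.2.2
    have := hb hl
    rw [Set.mem_singleton_iff] at this
    subst this
    exact Set.disjoint_left.1 hs.2.1 hi hl
  rcases h1 with h1 | h1 <;> rcases h2 with h2 | h2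
  · obtain ⟨c, e, -, hc⟩ := h1
    obtain ⟨c', e', -, hc'⟩ := h2
    have hm : i ∈ Vars (Xv i) := by simp [Vars_Xv]
    have d1 := hc i hm
    have d2 := hc' i hm
    have h3 := mul_inv_cancel₀ hf
    rw [e'] at h3
    nth_rewrite 1 [e] at h3
    have h4 := congrArg (D i) h3
    simp only [D_mul, d1, d2, D_Xv, D_one, if_true] at h4
    have h5 : (1 : K) = 0 := by linear_combination -h3 + (Xv i / 2) * h4
    exact one_ne_zero h5
  · exact aux hf h1 h2
  · exact aux (inv_ne_zero hf) h2 (by rwa [inv_inv])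
  · obtain ⟨c, a, b, hs, hi⟩ := h1
    obtain ⟨c', a', b', hs', hi'⟩ := h2
    have w1 := hs.conn (W := Vars (a' + b')) (fun k hk m hm =>
      (M_inv k m hf).1 (hs'.1.M_zero hk hm)) hi (by rw [Vars_add hs'.2.1]; exact Or.inl hi')
    have w2 := hs'.conn (W := Vars (a + b)) (fun k hk m hm =>
      (M_inv k m hf).2 (hs.1.M_zero hk hm)) hi' (by rw [Vars_add hs.2.1]; exact Or.inl hi)
    rw [Vars_add hs'.2.1] at w1
    rw [Vars_add hs.2.1] at w2
    have sep : ∀ k ∈ Vars a, ∀ l ∈ Vars b, D k (D l f⁻¹) ≠ 0 := by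
      intro k hk l hl h0
      obtain ⟨e1, e2, e3⟩ := hs.facts hk hl
      rw [DD_inv k l hf, e3] at h0
      simp [hf, e1, e2] at h0
    have hb : Vars b ⊆ Vars a' := fun l hl => by
      by_contra hc
      exact sep i hi l hl (hs'.facts hi' ((w1.2 hl).resolve_left hc)).2.2
    obtain ⟨l, hl⟩ := hs.2.2.2
    have ha : Vars a ⊆ Vars a' := fun k hk => by
      by_contra hc
      exact sep k hk l hl (hs'.swap.facts ((w1.1 hk).resolve_left hc) (hb hl)).2.2
    obtain ⟨m, hm⟩ := hs'.2.2.2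
    have : m ∈ Vars a' := by
      rcases w2.2 hm with h | h
      · exact ha h
      · exact hb h
    exact Set.disjoint_left.1 hs'.2.1 this hm

lemma Block.mul {f c s w : K} (h : Block f c s) (hw : w ≠ 0) (hd : ∀ k ∈ Vars f, D k w = 0) :
    Block (f * w) (c * w) s := by
  obtain ⟨rfl, hc, h⟩ := h
  refine ⟨by ring, mul_ne_zero hc hw, fun k hk => ?_⟩
  have h1 := h k hk
  have h2 := hd k (by rw [mem_Vars_iff, D_mul, h1]; simpa [hc] using (mem_Vars_iff _ _).1 hk)
  rw [D_mul, h1, h2]; simp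

lemma NP.mul {f w : K} {i : ℕ} (h : NP f i) (hw : w ≠ 0) (hd : ∀ k ∈ Vars f, D k w = 0) :
    NP (f * w) i := by
  rcases h with ⟨c, h⟩ | ⟨c, a, b, h, hi⟩
  · exact Or.inl ⟨_, h.mul hw hd⟩
  · exact Or.inr ⟨_, a, b, ⟨h.1.mul hw hd, h.2⟩, hi⟩

lemma D_zero_of_disj {f g : K} (d : Disjoint (Vars f) (Vars g)) : ∀ k ∈ Vars f, D k g = 0 :=
  fun _ hk => (notMem_Vars_iff _ _).1 (fun h => Set.disjoint_left.1 d hk h)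

lemma NP_add {g h : K} (hg : (Vars g).Nonempty) (hh : (Vars h).Nonempty)
    (d : Disjoint (Vars g) (Vars h)) : ∀ i ∈ Vars (g + h), NP (g + h) i := by
  have hs : SBlock (g + h) 1 g h :=
    ⟨⟨by ring, one_ne_zero, fun k _ => D_one k⟩, d, hg, hh⟩
  intro i hi
  rw [Vars_add d] at hi
  rcases hi with hi | hi
  · exact Or.inr ⟨_, _, _, hs, hi⟩
  · exact Or.inr ⟨_, _, _, hs.swap, hi⟩

lemma NP_mul {g h : K} (hg : g ≠ 0) (hh : h ≠ 0) (d : Disjoint (Vars g) (Vars h))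
    (h1 : ∀ i ∈ Vars g, NP g i) (h2 : ∀ i ∈ Vars h, NP h i) : ∀ i ∈ Vars (g * h), NP (g * h) i := by
  intro i hi
  rw [Vars_mul d hg hh] at hi
  rcases hi with hi | hi
  · exact (h1 i hi).mul hh (D_zero_of_disj d)
  · rw [mul_comm]
    exact (h2 i hi).mul hg (D_zero_of_disj d.symm)

lemma NP_Xv (i : ℕ) : ∀ j ∈ Vars (Xv i), NP (Xv i) j := by
  intro j hj
  rw [Vars_Xv] at hj
  rw [Set.mem_singleton_iff.1 hj]
  exact Or.inl ⟨1, by ring, one_ne_zero, fun k _ => D_one k⟩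

lemma EndsWith.NP {f : K} {o : Op} (h : EndsWith f o) (ho : o ≠ Op.div) :
    ∀ i ∈ Vars f, NP f i := by
  induction h with
  | var i => exact NP_Xv i
  | add_base h => exact NP_add (IsAE.var _).nonempty (IsAE.var _).nonempty (disj_Xv h)
  | sub_base h =>
    rw [sub_eq_add_neg]
    exact NP_add (IsAE.var _).nonempty (by rw [Vars_neg]; exact (IsAE.var _).nonempty)
      (by rw [Vars_neg]; exact (disj_Xv h))
  | mul_base h => exact NP_mul (Xv_ne _) (Xv_ne _) (disj_Xv h) (NP_Xv _) (NP_Xv _)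
  | div_base h => exact absurd rfl ho
  | add_rec h1 h2 d => exact NP_add h1.nonempty h2.nonempty d
  | mul_rec h1 h2 d c o1 o2 _ _ e1 e2 => exact NP_mul h1.ne_zero h2.ne_zero d (e1 o1) (e2 o2)
  | div_rec h1 h2 d => exact absurd rfl ho
  | sub_rec h1 h2 d =>
    rw [sub_eq_add_neg]
    exact NP_add h1.nonempty (by rw [Vars_neg]; exact h2.nonempty) (by rwa [Vars_neg])

/-- Arithmetic expressions not ending with division. -/
def ND (f : K) : Prop := EndsIn f {Op.add, Op.sub, Op.mul}

lemma ND.isAE {f : K} (h : ND f) : IsAE f := by obtain ⟨o, -, h⟩ := h; exact h.isAE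

lemma ND.NP {f : K} (h : ND f) : ∀ i ∈ Vars f, NP f i := by
  obtain ⟨o, ho, h⟩ := h
  refine h.NP ?_
  rintro rfl
  simp at ho

lemma ND_of {f : K} {o : Op} (h : EndsWith f o) (ho : o ≠ Op.div) : ND f := by
  refine ⟨o, ?_, h⟩
  cases o <;> simp at *

/-- Uniqueness of the quotient decomposition, up to constants. -/
lemma quot_unique {g h g' h' u : K} (hg : ND g) (hh : ND h) (hg' : ND g') (hh' : ND h')
    (d : Disjoint (Vars g) (Vars h)) (d' : Disjoint (Vars g') (Vars h'))
    (hu : ∀ k, D k u = 0) (hu0 : u ≠ 0) (e : g / h = u * (g' / h')) :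
    (g = g' ∨ g = -g') ∧ (h = h' ∨ h = -h') := by
  have g0 := hg.isAE.ne_zero
  have h0 := hh.isAE.ne_zero
  have g0' := hg'.isAE.ne_zero
  have h0' := hh'.isAE.ne_zero
  have hinv : ∀ {x : K} {k}, D k x = 0 → D k x⁻¹ = 0 := fun hx => by rw [D_inv, hx]; simp
  have hui := fun k => hinv (hu k)
  have hf0 : g / h ≠ 0 := div_ne_zero g0 h0
  have n1 : ∀ i ∈ Vars g, NP (g / h) i := fun i hi => by
    rw [div_eq_mul_inv]
    exact (hg.NP i hi).mul (inv_ne_zero h0) (fun k hk => hinv (D_zero_of_disj d k hk))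
  have n2 : ∀ i ∈ Vars h, NP (g / h)⁻¹ i := fun i hi => by
    rw [inv_div, div_eq_mul_inv]
    exact (hh.NP i hi).mul (inv_ne_zero g0) (fun k hk => hinv (D_zero_of_disj d.symm k hk))
  have n3 : ∀ i ∈ Vars g', NP (g / h) i := fun i hi => by
    rw [e, show u * (g' / h') = g' * (u * h'⁻¹) by ring]
    refine (hg'.NP i hi).mul (mul_ne_zero hu0 (inv_ne_zero h0')) (fun k hk => ?_)
    rw [D_mul, hu, hinv (D_zero_of_disj d' k hk)]; simp
  have n4 : ∀ i ∈ Vars h', NP (g / h)⁻¹ i := fun i hi => by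
    rw [e, show (u * (g' / h'))⁻¹ = h' * (u⁻¹ * g'⁻¹) by field_simp]
    refine (hh'.NP i hi).mul (mul_ne_zero (inv_ne_zero hu0) (inv_ne_zero g0')) (fun k hk => ?_)
    rw [D_mul, hui, hinv (D_zero_of_disj d'.symm k hk)]; simp
  have x1 : ∀ i ∈ Vars g, i ∉ Vars h' := fun i hi hi' => NP_not_both hf0 (n1 i hi) (n4 i hi')
  have x2 : ∀ i ∈ Vars g', i ∉ Vars h := fun i hi hi' => NP_not_both hf0 (n3 i hi) (n2 i hi')
  have hv : Vars g ∪ Vars h = Vars g' ∪ Vars h' := by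
    rw [← hg.isAE.Vars_div hh.isAE d, ← hg'.isAE.Vars_div hh'.isAE d', e]
    ext i
    rw [mem_Vars_iff, mem_Vars_iff, D_mul, hu]
    simp [hu0]
  -- the ratio is a constant
  have e2 : g / g' = u * (h / h') := by
    field_simp at e ⊢
    linear_combination e
  have hconst : ∀ k, D k (g / g') = 0 := by
    intro k
    by_cases hk : k ∈ Vars g
    · have a1 : D k h = 0 := D_zero_of_disj d k hk
      have a2 : D k h' = 0 := (notMem_Vars_iff _ _).1 (x1 k hk)
      rw [e2, D_mul, hu, div_eq_mul_inv, D_mul, a1, hinv a2]; simp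
    · have hk' : k ∉ Vars g' := fun hk' => by
        have : k ∈ Vars g ∪ Vars h := by rw [hv]; exact Or.inl hk'
        exact x2 k hk' (this.resolve_left hk)
      rw [notMem_Vars_iff] at hk hk'
      rw [div_eq_mul_inv, D_mul, hk, hinv hk']; simp
  have hconst' : ∀ k, D k (h / h') = 0 := by
    intro k
    have : h / h' = u⁻¹ * (g / g') := by rw [e2]; field_simp
    rw [this, D_mul, hui, hconst]; simp
  obtain ⟨c, hc⟩ := const_of_D _ hconst
  obtain ⟨c', hc'⟩ := const_of_D _ hconst'
  rw [div_eq_iff g0'] at hc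
  rw [div_eq_iff h0'] at hc'
  exact ⟨const_pm_one hg.isAE hg'.isAE hc, const_pm_one hh.isAE hh'.isAE hc'⟩

lemma K_neg_ne {x : K} (hx : x ≠ 0) : -x ≠ x := by
  intro h; apply hx; linear_combination (-1/2 : K) * h

lemma quot_unique_pos {g h g' h' : K} (hg : ND g) (hh : ND h) (hg' : ND g') (hh' : ND h')
    (d : Disjoint (Vars g) (Vars h)) (d' : Disjoint (Vars g') (Vars h'))
    (e : g / h = g' / h') : (g = g' ∧ h = h') ∨ (g = -g' ∧ h = -h') := by
  have q0 : g' / h' ≠ 0 := div_ne_zero hg'.isAE.ne_zero hh'.isAE.ne_zero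
  obtain ⟨a | a, b | b⟩ := quot_unique hg hh hg' hh' d d' D_one one_ne_zero (by rwa [one_mul])
  · exact Or.inl ⟨a, b⟩
  · rw [a, b, div_neg] at e; exact absurd e (K_neg_ne q0)
  · rw [a, b, neg_div] at e; exact absurd e (K_neg_ne q0)
  · exact Or.inr ⟨a, b⟩

lemma quot_unique_neg {g h g' h' : K} (hg : ND g) (hh : ND h) (hg' : ND g') (hh' : ND h')
    (d : Disjoint (Vars g) (Vars h)) (d' : Disjoint (Vars g') (Vars h'))
    (e : g / h = -(g' / h')) : (g = -g' ∧ h = h') ∨ (g = g' ∧ h = -h') := by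
  have q0 : g' / h' ≠ 0 := div_ne_zero hg'.isAE.ne_zero hh'.isAE.ne_zero
  obtain ⟨a | a, b | b⟩ := quot_unique (u := -1) hg hh hg' hh' d d'
    (fun k => by rw [D_neg, D_one, neg_zero]) (by simp) (by rw [e]; ring)
  · rw [a, b] at e; exact absurd e.symm (K_neg_ne q0)
  · exact Or.inr ⟨a, b⟩
  · exact Or.inl ⟨a, b⟩
  · rw [a, b, neg_div_neg_eq] at e; exact absurd e.symm (K_neg_ne q0)


/-- `f` ends with an operator other than `-`. -/
def Pos (f : K) : Prop := ∃ o, o ≠ Op.sub ∧ EndsWith f o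

lemma Pos.isAE {f : K} (h : Pos f) : IsAE f := by obtain ⟨o, -, h⟩ := h; exact h.isAE

lemma two_or_three {g h : K} (hg : IsAE g) (hh : IsAE h) (d : Disjoint (Vars g) (Vars h)) :
    3 ≤ (Vars g ∪ Vars h).ncard ∨ ∃ i j, i ≠ j ∧ g = Xv i ∧ h = Xv j := by
  by_cases h3 : 3 ≤ (Vars g ∪ Vars h).ncard
  · exact Or.inl h3
  · right
    rw [ncard_union_ae hg hh d] at h3
    have h1 := hg.one_le
    have h2 := hh.one_le
    obtain ⟨i, rfl⟩ := hg.eq_Xv (by omega)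
    obtain ⟨j, rfl⟩ := hh.eq_Xv (by omega)
    exact ⟨i, j, disj_ne d, rfl, rfl⟩

lemma mk_add {g h : K} (hg : Pos g) (hh : Pos h) (d : Disjoint (Vars g) (Vars h)) :
    EndsWith (g + h) Op.add := by
  rcases two_or_three hg.isAE hh.isAE d with h3 | ⟨i, j, hij, rfl, rfl⟩
  · obtain ⟨o, ho, e⟩ := hg
    obtain ⟨o', ho', e'⟩ := hh
    exact .add_rec e.isAE e'.isAE d (by rwa [Vars_add d]) ho ho' e e'
  · exact .add_base hij

lemma mk_sub {g h : K} (hg : Pos g) (hh : Pos h) (d : Disjoint (Vars g) (Vars h))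
    (hf : FirstType h) : EndsWith (g - h) Op.sub := by
  rcases two_or_three hg.isAE hh.isAE d with h3 | ⟨i, j, hij, rfl, rfl⟩
  · obtain ⟨o, ho, e⟩ := hg
    obtain ⟨o', ho', e'⟩ := hh
    exact .sub_rec e.isAE e'.isAE d (by rwa [Vars_sub d]) ho ho' hf e e'
  · exact .sub_base hij

lemma ND.ends {f : K} (h : ND f) : ∃ o, o ≠ Op.div ∧ EndsWith f o := by
  obtain ⟨o, ho, e⟩ := h
  exact ⟨o, by rintro rfl; simp at ho, e⟩

lemma mk_mul {g h : K} (hg : ND g) (hh : ND h) (d : Disjoint (Vars g) (Vars h)) :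
    EndsWith (g * h) Op.mul := by
  rcases two_or_three hg.isAE hh.isAE d with h3 | ⟨i, j, hij, rfl, rfl⟩
  · obtain ⟨o, ho, e⟩ := hg.ends
    obtain ⟨o', ho', e'⟩ := hh.ends
    exact .mul_rec e.isAE e'.isAE d (by rwa [hg.isAE.Vars_mul hh.isAE d]) ho ho' e e'
  · exact .mul_base hij

lemma mk_div {g h : K} (hg : ND g) (hh : ND h) (d : Disjoint (Vars g) (Vars h)) :
    EndsWith (g / h) Op.div := by
  rcases two_or_three hg.isAE hh.isAE d with h3 | ⟨i, j, hij, rfl, rfl⟩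
  · obtain ⟨o, ho, e⟩ := hg.ends
    obtain ⟨o', ho', e'⟩ := hh.ends
    exact .div_rec e.isAE e'.isAE d (by rwa [hg.isAE.Vars_div hh.isAE d]) ho ho' e e'
  · exact .div_base hij

lemma Pos_Xv (i : ℕ) : Pos (Xv i) := ⟨_, by simp, .var i⟩
lemma ND_Xv (i : ℕ) : ND (Xv i) := ND_of (.var i) (by simp)

lemma Pos_add {g h : K} (hg : Pos g) (hh : Pos h) (d : Disjoint (Vars g) (Vars h)) :
    Pos (g + h) := ⟨_, by simp, mk_add hg hh d⟩

lemma ND_mul {g h : K} (hg : ND g) (hh : ND h) (d : Disjoint (Vars g) (Vars h)) :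
    ND (g * h) := ND_of (mk_mul hg hh d) (by simp)

lemma ends_sub_inv {f : K} (h : EndsWith f Op.sub) : ∃ p q, Pos p ∧ Pos q ∧ FirstType q ∧
    Disjoint (Vars p) (Vars q) ∧ f = p - q := by
  cases h with
  | sub_base hij => exact ⟨_, _, Pos_Xv _, Pos_Xv _, firstType_Xv _, disj_Xv hij, rfl⟩
  | sub_rec h1 h2 d _ o1 o2 hf e1 e2 => exact ⟨_, _, ⟨_, o1, e1⟩, ⟨_, o2, e2⟩, hf, d, rfl⟩

lemma ends_div_inv {f : K} (h : EndsWith f Op.div) : ∃ p q, ND p ∧ ND q ∧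
    Disjoint (Vars p) (Vars q) ∧ f = p / q := by
  cases h with
  | div_base hij => exact ⟨_, _, ND_Xv _, ND_Xv _, disj_Xv hij, rfl⟩
  | div_rec h1 h2 d _ o1 o2 e1 e2 => exact ⟨_, _, ND_of e1 o1, ND_of e2 o2, d, rfl⟩

/-- `f` ends with some operator. -/
def En (f : K) : Prop := ∃ o, EndsWith f o

lemma En.sub_cases {f : K} (h : En f) : Pos f ∨ ∃ p q, Pos p ∧ Pos q ∧ FirstType q ∧
    Disjoint (Vars p) (Vars q) ∧ f = p - q := by
  obtain ⟨o, h⟩ := h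
  by_cases ho : o = Op.sub
  · subst ho; exact Or.inr (ends_sub_inv h)
  · exact Or.inl ⟨o, ho, h⟩

lemma En.div_cases {f : K} (h : En f) : ND f ∨ ∃ p q, ND p ∧ ND q ∧
    Disjoint (Vars p) (Vars q) ∧ f = p / q := by
  obtain ⟨o, h⟩ := h
  by_cases ho : o = Op.div
  · subst ho; exact Or.inr (ends_div_inv h)
  · exact Or.inl (ND_of h ho)

lemma En_add_pos {a e : K} (ha : Pos a) (he : En e) (d : Disjoint (Vars a) (Vars e)) :
    En (a + e) := by
  rcases he.sub_cases with he | ⟨p, q, hp, hq, hf, d', rfl⟩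
  · exact ⟨_, mk_add ha he d⟩
  · rw [Vars_sub d', Set.disjoint_union_right] at d
    rw [show a + (p - q) = (a + p) - q by ring]
    exact ⟨_, mk_sub (Pos_add ha hp d.1) hq (by
      rw [Vars_add d.1, Set.disjoint_union_left]; exact ⟨d.2, d'⟩) hf⟩

lemma En_sub_pos {a b : K} (ha : Pos a) (hb : Pos b) (d : Disjoint (Vars a) (Vars b))
    (ih : IsAE (-b) → En (-b)) : En (a - b) := by
  by_cases h : IsAE (-b)
  · rw [sub_eq_add_neg]
    exact En_add_pos ha (ih h) (by rwa [Vars_neg])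
  · exact ⟨_, mk_sub ha hb d ⟨hb.isAE, h⟩⟩

lemma ends_exists (N : ℕ) : ∀ f : K, IsAE f → (Vars f).ncard = N → En f := by
  induction N using Nat.strong_induction_on with
  | _ N IH =>
  intro f hf hN
  have ih : ∀ x a : K, IsAE a → IsAE x → Disjoint (Vars a) (Vars x) →
      (Vars a ∪ Vars x).ncard ≤ N → IsAE (-x) → En (-x) := by
    intro x a ha hx d hc h
    rw [ncard_union_ae ha hx d] at hc
    have := ha.one_le
    exact IH (Vars x).ncard (by omega) _ h (by rw [Vars_neg])
  rcases hf.cases_vars with ⟨i, rfl⟩ | ⟨g, h, o, hg, hh, d, hv, e⟩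
  · exact ⟨_, .var i⟩
  have hc := ncard_union_ae hg hh d
  rw [← hv, hN] at hc
  have g1 := hg.one_le
  have h1 := hh.one_le
  have eg : En g := IH _ (by omega) g hg rfl
  have eh : En h := IH _ (by omega) h hh rfl
  cases o with
  | add =>
    simp only [applyOp] at e
    subst e
    rcases eg.sub_cases with eg | ⟨a, b, ha, hb, -, dab, rfl⟩
    · exact En_add_pos eg eh d
    rcases eh.sub_cases with eh | ⟨p, q, hp, hq, -, dpq, rfl⟩
    · rw [add_comm]
      exact En_add_pos eh eg d.symm
    rw [Vars_sub dab, Vars_sub dpq] at hv d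
    have dd := d
    rw [Set.disjoint_union_left, Set.disjoint_union_right, Set.disjoint_union_right] at dd
    obtain ⟨⟨d1, d2⟩, d3, d4⟩ := dd
    rw [show a - b + (p - q) = (a + p) - (b + q) by ring]
    have D1 : Disjoint (Vars (a + p)) (Vars (b + q)) := by
      rw [Vars_add d1, Vars_add d4, Set.disjoint_union_left, Set.disjoint_union_right,
        Set.disjoint_union_right]
      exact ⟨⟨dab, d2⟩, d3.symm, dpq⟩
    have A1 := Pos_add ha hp d1
    have A2 := Pos_add hb hq d4
    refine En_sub_pos A1 A2 D1 (ih _ _ A1.isAE A2.isAE D1 ?_)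
    rw [← hN, hv, Vars_add d1, Vars_add d4, Set.union_union_union_comm]
  | sub =>
    simp only [applyOp] at e
    subst e
    rcases eg.sub_cases with eg | ⟨a, b, ha, hb, -, dab, rfl⟩ <;>
    rcases eh.sub_cases with eh | ⟨p, q, hp, hq, -, dpq, rfl⟩
    · exact En_sub_pos eg eh d (ih _ _ hg hh d (by rw [← hN, hv]))
    · rw [Vars_sub dpq] at hv d
      have dd := d
      rw [Set.disjoint_union_right] at dd
      obtain ⟨d1, d2⟩ := dd
      rw [show g - (p - q) = (g + q) - p by ring]
      have D1 : Disjoint (Vars (g + q)) (Vars p) := by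
        rw [Vars_add d2, Set.disjoint_union_left]
        exact ⟨d1, dpq.symm⟩
      have A1 := Pos_add eg hq d2
      refine En_sub_pos A1 hp D1 (ih _ _ A1.isAE hp.isAE D1 ?_)
      rw [← hN, hv, Vars_add d2, Set.union_assoc, Set.union_comm (Vars q)]
    · rw [Vars_sub dab] at hv d
      have dd := d
      rw [Set.disjoint_union_left] at dd
      obtain ⟨d1, d2⟩ := dd
      rw [show a - b - h = a - (b + h) by ring]
      have D1 : Disjoint (Vars a) (Vars (b + h)) := by
        rw [Vars_add d2, Set.disjoint_union_right]
        exact ⟨dab, d1⟩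
      have A1 := Pos_add hb eh d2
      refine En_sub_pos ha A1 D1 (ih _ _ ha.isAE A1.isAE D1 ?_)
      rw [← hN, hv, Vars_add d2, Set.union_assoc]
    · rw [Vars_sub dab, Vars_sub dpq] at hv d
      have dd := d
      rw [Set.disjoint_union_left, Set.disjoint_union_right, Set.disjoint_union_right] at dd
      obtain ⟨⟨d1, d2⟩, d3, d4⟩ := dd
      rw [show a - b - (p - q) = (a + q) - (b + p) by ring]
      have D1 : Disjoint (Vars (a + q)) (Vars (b + p)) := by
        rw [Vars_add d2, Vars_add d3, Set.disjoint_union_left, Set.disjoint_union_right,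
          Set.disjoint_union_right]
        exact ⟨⟨dab, d1⟩, d4.symm, dpq.symm⟩
      have A1 := Pos_add ha hq d2
      have A2 := Pos_add hb hp d3
      refine En_sub_pos A1 A2 D1 (ih _ _ A1.isAE A2.isAE D1 ?_)
      rw [← hN, hv, Vars_add d2, Vars_add d3, Set.union_union_union_comm,
        Set.union_comm (Vars q)]
  | mul =>
    simp only [applyOp] at e
    subst e
    rcases eg.div_cases with eg | ⟨a, b, ha, hb, dab, rfl⟩ <;>
    rcases eh.div_cases with eh | ⟨p, q, hp, hq, dpq, rfl⟩
    · exact ⟨_, mk_mul eg eh d⟩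
    · rw [hp.isAE.Vars_div hq.isAE dpq, Set.disjoint_union_right] at d
      rw [← mul_div_assoc]
      refine ⟨_, mk_div (ND_mul eg hp d.1) hq ?_⟩
      rw [hg.Vars_mul hp.isAE d.1, Set.disjoint_union_left]
      exact ⟨d.2, dpq⟩
    · rw [ha.isAE.Vars_div hb.isAE dab, Set.disjoint_union_left] at d
      rw [div_mul_eq_mul_div]
      refine ⟨_, mk_div (ND_mul ha eh d.1) hb ?_⟩
      rw [ha.isAE.Vars_mul hh d.1, Set.disjoint_union_left]
      exact ⟨dab, d.2.symm⟩
    · rw [ha.isAE.Vars_div hb.isAE dab, hp.isAE.Vars_div hq.isAE dpq,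
        Set.disjoint_union_left, Set.disjoint_union_right, Set.disjoint_union_right] at d
      obtain ⟨⟨d1, d2⟩, d3, d4⟩ := d
      rw [div_mul_div_comm]
      refine ⟨_, mk_div (ND_mul ha hp d1) (ND_mul hb hq d4) ?_⟩
      rw [ha.isAE.Vars_mul hp.isAE d1, hb.isAE.Vars_mul hq.isAE d4, Set.disjoint_union_left,
        Set.disjoint_union_right, Set.disjoint_union_right]
      exact ⟨⟨dab, d2⟩, d3.symm, dpq⟩
  | div =>
    simp only [applyOp] at e
    subst e
    rcases eg.div_cases with eg | ⟨a, b, ha, hb, dab, rfl⟩ <;>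
    rcases eh.div_cases with eh | ⟨p, q, hp, hq, dpq, rfl⟩
    · exact ⟨_, mk_div eg eh d⟩
    · rw [hp.isAE.Vars_div hq.isAE dpq, Set.disjoint_union_right] at d
      rw [div_div_eq_mul_div]
      refine ⟨_, mk_div (ND_mul eg hq d.2) hp ?_⟩
      rw [hg.Vars_mul hq.isAE d.2, Set.disjoint_union_left]
      exact ⟨d.1, dpq.symm⟩
    · rw [ha.isAE.Vars_div hb.isAE dab, Set.disjoint_union_left] at d
      rw [div_div]
      refine ⟨_, mk_div ha (ND_mul hb eh d.2) ?_⟩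
      rw [hb.isAE.Vars_mul hh d.2, Set.disjoint_union_right]
      exact ⟨dab, d.1⟩
    · rw [ha.isAE.Vars_div hb.isAE dab, hp.isAE.Vars_div hq.isAE dpq,
        Set.disjoint_union_left, Set.disjoint_union_right, Set.disjoint_union_right] at d
      obtain ⟨⟨d1, d2⟩, d3, d4⟩ := d
      rw [div_div_div_eq]
      refine ⟨_, mk_div (ND_mul ha hq d2) (ND_mul hb hp d3) ?_⟩
      rw [ha.isAE.Vars_mul hq.isAE d2, hb.isAE.Vars_mul hp.isAE d3, Set.disjoint_union_left,
        Set.disjoint_union_right, Set.disjoint_union_right]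
      exact ⟨⟨dab, d1⟩, d4.symm, dpq.symm⟩

lemma IsAE.en {f : K} (h : IsAE f) : En f := ends_exists _ f h rfl


lemma D_neg_one (k : ℕ) : D k (-1 : K) = 0 := by rw [D_neg, D_one, neg_zero]

lemma NP.neg {f : K} {i : ℕ} (h : NP f i) : NP (-f) i := by
  have := h.mul (w := -1) (by simp) (fun k _ => D_neg_one k)
  rwa [mul_neg_one] at this

lemma NP_inv_quot {g h : K} (hg : ND g) (hh : ND h) (d : Disjoint (Vars g) (Vars h)) :
    ∀ i ∈ Vars h, NP (g / h)⁻¹ i := fun i hi => by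
  rw [inv_div, div_eq_mul_inv]
  exact (hh.NP i hi).mul (inv_ne_zero hg.isAE.ne_zero) (fun k hk => by
    rw [D_inv, D_zero_of_disj d.symm k hk]; simp)

lemma quot_not_ND {g h : K} (hg : ND g) (hh : ND h) (d : Disjoint (Vars g) (Vars h)) :
    ¬ ∀ i ∈ Vars (g / h), NP (g / h) i := by
  intro hN
  obtain ⟨i, hi⟩ := hh.isAE.nonempty
  refine NP_not_both (div_ne_zero hg.isAE.ne_zero hh.isAE.ne_zero) (hN i ?_)
    (NP_inv_quot hg hh d i hi)
  rw [hg.isAE.Vars_div hh.isAE d]; exact Or.inr hi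

lemma ND.neg {g : K} (hg : ND g) (h : IsAE (-g)) : ND (-g) := by
  rcases h.en.div_cases with h | ⟨p, q, hp, hq, d, e⟩
  · exact h
  · refine absurd ?_ (quot_not_ND hp hq d)
    rw [← e]
    intro i hi
    rw [Vars_neg] at hi
    exact (hg.NP i hi).neg

lemma ends_sub_neg {f : K} (h : EndsWith f Op.sub) : IsAE (-f) := by
  obtain ⟨p, q, hp, hq, -, d, rfl⟩ := ends_sub_inv h
  rw [neg_sub]
  exact .sub hq.isAE hp.isAE d.symm

lemma neg_quot {g h : K} (hg : ND g) (hh : ND h) (d : Disjoint (Vars g) (Vars h)) :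
    IsAE (-(g / h)) ↔ IsAE (-g) ∨ IsAE (-h) := by
  constructor
  · intro hn
    rcases hn.en.div_cases with h' | ⟨p, q, hp, hq, d', e⟩
    · exfalso
      refine quot_not_ND hg hh d (fun i hi => ?_)
      have := (h'.NP i (by rwa [Vars_neg])).neg
      rwa [neg_neg] at this
    · rcases quot_unique_neg hp hq hg hh d' d e.symm with ⟨e1, -⟩ | ⟨-, e2⟩
      · rw [← e1]; exact Or.inl hp.isAE
      · rw [← e2]; exact Or.inr hq.isAE
  · rintro (hn | hn)
    · rw [← neg_div]; exact .div hn hh.isAE (by rwa [Vars_neg])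
    · rw [← div_neg]; exact .div hg.isAE hn (by rwa [Vars_neg])

lemma ND.permAct {f : K} (h : ND f) (σ : Equiv.Perm ℕ) : ND (permAct σ f) :=
  Iso.endsIn ⟨σ, rfl⟩ h

lemma iso_quot {g h g' h' : K} (hg : ND g) (hh : ND h) (hg' : ND g') (hh' : ND h')
    (d : Disjoint (Vars g) (Vars h)) (d' : Disjoint (Vars g') (Vars h')) :
    Iso (g / h) (g' / h') ↔ (Iso g g' ∧ Iso h h') ∨ (Iso g (-g') ∧ Iso h (-h')) := by
  constructor
  · rintro ⟨σ, e⟩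
    rw [map_div₀] at e
    rcases quot_unique_pos (hg.permAct σ) (hh.permAct σ) hg' hh' (disj_permAct σ d) d' e with h | h
    · exact Or.inl ⟨⟨σ, h.1⟩, ⟨σ, h.2⟩⟩
    · exact Or.inr ⟨⟨σ, h.1⟩, ⟨σ, h.2⟩⟩
  · rintro (⟨h1, h2⟩ | ⟨h1, h2⟩)
    · obtain ⟨ρ, e1, e2⟩ := h1.glue hg.isAE hh.isAE d d' h2
      exact ⟨ρ, by rw [map_div₀, e1, e2]⟩
    · obtain ⟨ρ, e1, e2⟩ := h1.glue hg.isAE hh.isAE d (by rwa [Vars_neg, Vars_neg]) h2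
      exact ⟨ρ, by rw [map_div₀, e1, e2, neg_div_neg_eq]⟩

lemma iso_neg_quot {g h : K} (hg : ND g) (hh : ND h) (d : Disjoint (Vars g) (Vars h)) :
    Iso (g / h) (-(g / h)) ↔ ThirdType g ∨ ThirdType h := by
  constructor
  · rintro ⟨σ, e⟩
    rw [map_div₀] at e
    rcases quot_unique_neg (hg.permAct σ) (hh.permAct σ) hg hh (disj_permAct σ d) d e with hx | hx
    · have i : Iso g (-g) := ⟨σ, hx.1⟩
      exact Or.inl ⟨hg.isAE, i.isAE hg.isAE, i⟩
    · have i : Iso h (-h) := ⟨σ, hx.2⟩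
      exact Or.inr ⟨hh.isAE, i.isAE hh.isAE, i⟩
  · rintro (h | h)
    · obtain ⟨ρ, e1, e2⟩ := h.2.2.glue hg.isAE hh.isAE d (by rwa [Vars_neg]) (Iso.refl _)
      exact ⟨ρ, by rw [map_div₀, e1, e2, neg_div]⟩
    · obtain ⟨ρ, e1, e2⟩ := (Iso.refl g).glue hg.isAE hh.isAE d (by rwa [Vars_neg]) h.2.2
      exact ⟨ρ, by rw [map_div₀, e1, e2, div_neg]⟩

/-- The three sets of non-division expressions by type. -/
def SF : Set K := {g | FirstType g ∧ ND g}
def SB : Set K := {g | SecondType g ∧ ND g}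
def SC : Set K := {g | ThirdType g ∧ ND g}

lemma SB_eq : Bset {Op.add, Op.sub, Op.mul} = SB := rfl
lemma SC_eq : Cset {Op.add, Op.sub, Op.mul} = SC := rfl
lemma SF_eq : Fset {Op.add, Op.mul} = SF := by
  ext f
  constructor
  · rintro ⟨hf, o, ho, e⟩
    exact ⟨hf, o, by rcases ho with rfl | rfl <;> simp, e⟩
  · rintro ⟨hf, o, ho, e⟩
    refine ⟨hf, o, ?_, e⟩
    rcases ho with rfl | rfl | rfl
    · simp
    · exact absurd (ends_sub_neg e) hf.2
    · simp

lemma ND.trichotomy {g : K} (h : ND g) : g ∈ SF ∨ g ∈ SB ∨ g ∈ SC := by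
  by_cases h1 : IsAE (-g)
  · by_cases h2 : Iso g (-g)
    · exact Or.inr (Or.inr ⟨⟨h.isAE, h1, h2⟩, h⟩)
    · exact Or.inr (Or.inl ⟨⟨h.isAE, h1, h2⟩, h⟩)
  · exact Or.inl ⟨⟨h.isAE, h1⟩, h⟩

lemma not_SF_SB {g : K} (h1 : g ∈ SF) (h2 : g ∈ SB) : False := h1.1.2 h2.1.2.1
lemma not_SF_SC {g : K} (h1 : g ∈ SF) (h2 : g ∈ SC) : False := h1.1.2 h2.1.2.1
lemma not_SB_SC {g : K} (h1 : g ∈ SB) (h2 : g ∈ SC) : False := h1.1.2.2 h2.1.2.2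

lemma SB_neg {g : K} (h : g ∈ SB) : -g ∈ SB :=
  ⟨⟨h.1.2.1, by rw [neg_neg]; exact h.1.1, fun h' => h.1.2.2 (by
    rw [neg_neg] at h'; exact h'.symm)⟩, h.2.neg h.1.2.1⟩

lemma SC_neg {g : K} (h : g ∈ SC) : -g ∈ SC :=
  ⟨⟨h.1.2.1, by rw [neg_neg]; exact h.1.1, by
    rw [neg_neg]; exact h.1.2.2.symm⟩, h.2.neg h.1.2.1⟩

lemma SF_neg {g : K} (h : g ∈ SF) (h' : ND (-g)) : False := h.1.2 h'.isAE

lemma SF_iso {f g : K} (i : Iso f g) (h : f ∈ SF) : g ∈ SF := ⟨i.firstType h.1, i.endsIn h.2⟩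
lemma SB_iso {f g : K} (i : Iso f g) (h : f ∈ SB) : g ∈ SB := ⟨i.secondType h.1, i.endsIn h.2⟩
lemma SC_iso {f g : K} (i : Iso f g) (h : f ∈ SC) : g ∈ SC := ⟨i.thirdType h.1, i.endsIn h.2⟩

lemma quot_first {g h : K} (hg : ND g) (hh : ND h) (d : Disjoint (Vars g) (Vars h)) :
    FirstType (g / h) ↔ g ∈ SF ∧ h ∈ SF := by
  unfold FirstType
  rw [neg_quot hg hh d]
  have : IsAE (g / h) := .div hg.isAE hh.isAE d
  have := hg.isAE
  have := hh.isAE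
  simp only [SF, Set.mem_ofPred_eq, FirstType]
  tauto

lemma quot_third {g h : K} (hg : ND g) (hh : ND h) (d : Disjoint (Vars g) (Vars h)) :
    ThirdType (g / h) ↔ g ∈ SC ∨ h ∈ SC := by
  unfold ThirdType
  rw [neg_quot hg hh d, iso_neg_quot hg hh d]
  have : IsAE (g / h) := .div hg.isAE hh.isAE d
  have := hg.isAE
  have := hh.isAE
  simp only [SC, Set.mem_ofPred_eq, ThirdType]
  tauto

lemma quot_second {g h : K} (hg : ND g) (hh : ND h) (d : Disjoint (Vars g) (Vars h)) :
    SecondType (g / h) ↔ (g ∈ SB ∧ h ∈ SF) ∨ (g ∈ SF ∧ h ∈ SB) ∨ (g ∈ SB ∧ h ∈ SB) := by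
  have e : SecondType (g / h) ↔ ¬ FirstType (g / h) ∧ ¬ ThirdType (g / h) := by
    have : IsAE (g / h) := .div hg.isAE hh.isAE d
    unfold SecondType FirstType ThirdType
    tauto
  rw [e, quot_first hg hh d, quot_third hg hh d]
  constructor
  · rintro ⟨h1, h2⟩
    rcases hg.trichotomy with a | a | a
    · rcases hh.trichotomy with b | b | b
      · exact absurd ⟨a, b⟩ h1
      · exact Or.inr (Or.inl ⟨a, b⟩)
      · exact absurd (Or.inr b) h2
    · rcases hh.trichotomy with b | b | b
      · exact Or.inl ⟨a, b⟩
      · exact Or.inr (Or.inr ⟨a, b⟩)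
      · exact absurd (Or.inr b) h2
    · exact absurd (Or.inl a) h2
  · rintro (⟨a, b⟩ | ⟨a, b⟩ | ⟨a, b⟩)
    · exact ⟨fun h => not_SF_SB h.1 a, fun h => h.elim (not_SB_SC a) (not_SF_SC b)⟩
    · exact ⟨fun h => not_SF_SB h.2 b, fun h => h.elim (not_SF_SC a) (not_SB_SC b)⟩
    · exact ⟨fun h => not_SF_SB h.1 a, fun h => h.elim (not_SB_SC a) (not_SB_SC b)⟩


lemma ae_finite (N : ℕ) : ∀ S : Set ℕ, S.Finite → S.ncard = N →
    {f : K | IsAE f ∧ Vars f ⊆ S}.Finite := by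
  induction N using Nat.strong_induction_on with
  | _ N IH =>
  intro S hS hN
  let A : Set K := ⋃ j ∈ S, {f : K | IsAE f ∧ Vars f ⊆ S \ {j}}
  have hA : A.Finite := by
    refine hS.biUnion (fun j hj => ?_)
    refine IH (S \ {j}).ncard ?_ _ hS.sdiff rfl
    rw [← hN]
    exact Set.ncard_sdiff_singleton_lt_of_mem hj hS
  let B : Set K := Xv '' S ∪ (Set.image2 (applyOp Op.add) A A ∪ Set.image2 (applyOp Op.sub) A A ∪
    Set.image2 (applyOp Op.mul) A A ∪ Set.image2 (applyOp Op.div) A A)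
  have hB : B.Finite := (hS.image _).union ((((hA.image2 _ hA).union (hA.image2 _ hA)).union
    (hA.image2 _ hA)).union (hA.image2 _ hA))
  refine hB.subset ?_
  rintro f ⟨hf, hv⟩
  rcases hf.cases_vars with ⟨i, rfl⟩ | ⟨g, h, o, hg, hh, d, hv', e⟩
  · exact Or.inl ⟨i, hv (by simp [Vars_Xv]), rfl⟩
  · right
    rw [hv', Set.union_subset_iff] at hv
    have mem : ∀ {g h : K}, IsAE g → IsAE h → Disjoint (Vars g) (Vars h) → Vars g ⊆ S →
        Vars h ⊆ S → g ∈ A := by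
      intro g h hg hh d h1 h2
      obtain ⟨j, hj⟩ := hh.nonempty
      refine Set.mem_biUnion (h2 hj) ⟨hg, fun i hi => ⟨h1 hi, ?_⟩⟩
      rintro rfl
      exact Set.disjoint_left.1 d hi hj
    have a := mem hg hh d hv.1 hv.2
    have b := mem hh hg d.symm hv.2 hv.1
    subst e
    cases o
    · exact Or.inl (Or.inl (Or.inl ⟨g, a, h, b, rfl⟩))
    · exact Or.inl (Or.inl (Or.inr ⟨g, a, h, b, rfl⟩))
    · exact Or.inl (Or.inr ⟨g, a, h, b, rfl⟩)
    · exact Or.inr ⟨g, a, h, b, rfl⟩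

lemma varsUpTo_eq (n : ℕ) : varsUpTo n = ↑(Finset.Icc 1 n) := by
  ext i; simp [varsUpTo]

lemma varsUpTo_finite (n : ℕ) : (varsUpTo n).Finite := by
  rw [varsUpTo_eq]; exact Finset.finite_toSet _

lemma varsUpTo_ncard (n : ℕ) : (varsUpTo n).ncard = n := by
  rw [varsUpTo_eq, Set.ncard_coe_finset]; simp

lemma AEn_finite (n : ℕ) : (AEn n).Finite :=
  (ae_finite _ _ (varsUpTo_finite n) rfl).subset (fun _ hf => ⟨hf.1, hf.2.subset⟩)

lemma classes_finite {S : Set K} {n : ℕ} (h : S ⊆ AEn n) : (classes S).Finite :=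
  ((AEn_finite n).subset h).image _

lemma count_union {A B : Set K} {n : ℕ} (hA : A ⊆ AEn n) (hB : B ⊆ AEn n)
    (h : ∀ a ∈ A, ∀ b ∈ B, ¬ Iso a b) :
    countClasses (A ∪ B) = countClasses A + countClasses B := by
  unfold countClasses
  rw [show classes (A ∪ B) = classes A ∪ classes B from Set.image_union _ _ _]
  refine Set.ncard_union_eq ?_ (classes_finite hA) (classes_finite hB)
  rw [Set.disjoint_left]
  rintro _ ⟨a, ha, rfl⟩ ⟨b, hb, e⟩
  exact h a ha b hb (classOf_eq_iff.1 e.symm)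

/-- An isomorphic copy with a prescribed set of variables. -/
lemma copy {g : K} (T : Set ℕ) (hT : T.Finite) (hg : IsAE g) (hc : (Vars g).ncard = T.ncard) :
    ∃ g', Iso g g' ∧ Vars g' = T := by
  have he : (Vars g).encard = T.encard := by
    rw [← hg.finite.cast_ncard_eq, ← hT.cast_ncard_eq, hc]
  obtain ⟨f, hf⟩ := hg.finite.exists_bijOn_of_encard_eq he
  obtain ⟨ρ, hρ⟩ := exists_perm_ext f (Vars g) hg.finite hf.injOn
  refine ⟨permAct ρ g, ⟨ρ, rfl⟩, ?_⟩
  rw [Vars_permAct, Set.image_congr hρ, hf.image_eq]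

lemma ncard_image_eq {X A B : Type*} (α : X → A) (β : X → B) (R : Set X)
    (h : ∀ p ∈ R, ∀ q ∈ R, α p = α q ↔ β p = β q) : (α '' R).ncard = (β '' R).ncard := by
  have hc : ∀ a : α '' R, ∃ p ∈ R, α p = a := fun a => a.2
  choose c hc1 hc2 using hc
  refine Set.ncard_congr (fun a ha => β (c ⟨a, ha⟩)) ?_ ?_ ?_
  · intro a ha; exact ⟨_, hc1 _, rfl⟩
  · intro a b ha hb e
    have := (h _ (hc1 ⟨a, ha⟩) _ (hc1 ⟨b, hb⟩)).2 e
    rwa [hc2, hc2] at this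
  · rintro _ ⟨p, hp, rfl⟩
    refine ⟨α p, ⟨p, hp, rfl⟩, ?_⟩
    exact (h _ (hc1 _) _ hp).1 (hc2 ⟨α p, ⟨p, hp, rfl⟩⟩)

/-- Quotients with numerator in `U` and denominator in `V`. -/
def Quo (U V : Set K) (n : ℕ) : Set K :=
  {f | ∃ g ∈ U, ∃ h ∈ V, Disjoint (Vars g) (Vars h) ∧ Vars g ∪ Vars h = varsUpTo n ∧ f = g / h}

lemma Quo_sub {U V : Set K} (hU : ∀ g ∈ U, ND g) (hV : ∀ g ∈ V, ND g) (n : ℕ) :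
    Quo U V n ⊆ AEn n := by
  rintro _ ⟨g, hg, h, hh, d, hv, rfl⟩
  exact ⟨.div (hU g hg).isAE (hV h hh).isAE d, by
    rw [(hU g hg).isAE.Vars_div (hV h hh).isAE d, hv]⟩

lemma count_quo {U V : Set K} (hU : ∀ g ∈ U, ND g) (hV : ∀ g ∈ V, ND g)
    (iU : ∀ f g, Iso f g → f ∈ U → g ∈ U) (iV : ∀ f g, Iso f g → f ∈ V → g ∈ V)
    (hinj : ∀ g ∈ U, ∀ g' ∈ U, ∀ h ∈ V, ∀ h' ∈ V, Iso g (-g') → Iso h (-h') →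
      Iso g g' ∧ Iso h h') (n : ℕ) :
    countClasses (Quo U V n) = ∑ k ∈ Finset.Icc 1 (n - 1),
      countClasses (U ∩ AEn k) * countClasses (V ∩ AEn (n - k)) := by
  let R : Set (K × K) := {p | p.1 ∈ U ∧ p.2 ∈ V ∧ Disjoint (Vars p.1) (Vars p.2) ∧
    Vars p.1 ∪ Vars p.2 = varsUpTo n}
  have e1 : classes (Quo U V n) = (fun p : K × K => classOf (p.1 / p.2)) '' R := by
    ext c
    constructor
    · rintro ⟨_, ⟨g, hg, h, hh, d, hv, rfl⟩, rfl⟩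
      exact ⟨(g, h), ⟨hg, hh, d, hv⟩, rfl⟩
    · rintro ⟨⟨g, h⟩, ⟨hg, hh, d, hv⟩, rfl⟩
      exact ⟨_, ⟨g, hg, h, hh, d, hv, rfl⟩, rfl⟩
  let Q : ℕ → Set (Set K × Set K) := fun k =>
    classes (U ∩ AEn k) ×ˢ classes (V ∩ AEn (n - k))
  have e2 : (fun p : K × K => (classOf p.1, classOf p.2)) '' R =
      ⋃ k ∈ (↑(Finset.Icc 1 (n - 1)) : Set ℕ), Q k := by
    ext ⟨c, c'⟩
    rw [Set.mem_iUnion₂]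
    constructor
    · rintro ⟨⟨g, h⟩, ⟨hg, hh, d, hv⟩, e⟩
      simp only [Prod.mk.injEq] at e hg hh d hv
      obtain ⟨rfl, rfl⟩ := e
      have ag := (hU g hg).isAE
      have ah := (hV h hh).isAE
      have hc := ncard_union_ae ag ah d
      rw [hv, varsUpTo_ncard] at hc
      have g1 := ag.one_le
      have h1 := ah.one_le
      obtain ⟨g', ig, vg⟩ := copy (varsUpTo (Vars g).ncard) (varsUpTo_finite _) ag
        (varsUpTo_ncard _).symm
      obtain ⟨h', ih, vh⟩ := copy (varsUpTo (n - (Vars g).ncard)) (varsUpTo_finite _) ah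
        (by rw [varsUpTo_ncard]; omega)
      refine ⟨(Vars g).ncard, ?_, ⟨g', ⟨iU _ _ ig hg, ig.isAE ag, vg⟩, classOf_eq_iff.2 ig.symm⟩,
        ⟨h', ⟨iV _ _ ih hh, ih.isAE ah, vh⟩, classOf_eq_iff.2 ih.symm⟩⟩
      simp only [Finset.coe_Icc, Set.mem_Icc]
      omega
    · rintro ⟨k, hk, ⟨g, ⟨hg, ag, vg⟩, e1⟩, ⟨h, ⟨hh, ah, vh⟩, e2⟩⟩
      simp only at e1 e2
      subst e1 e2
      simp only [Finset.coe_Icc, Set.mem_Icc] at hk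
      have hsub : varsUpTo k ⊆ varsUpTo n := fun i hi => ⟨hi.1, by have := hi.2; omega⟩
      obtain ⟨h', ih, vh'⟩ := copy (varsUpTo n \ varsUpTo k) (varsUpTo_finite _).sdiff ah (by
        rw [Set.ncard_sdiff hsub (varsUpTo_finite _), varsUpTo_ncard, varsUpTo_ncard, vh,
          varsUpTo_ncard])
      refine ⟨(g, h'), ⟨hg, iV _ _ ih hh, ?_, ?_⟩, ?_⟩
      · simp only [vg, vh']; exact Set.disjoint_sdiff_right
      · simp only [vg, vh']; exact Set.union_sdiff_cancel hsub
      · simp only [Prod.mk.injEq, true_and]; exact classOf_eq_iff.2 ih.symm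
  unfold countClasses
  rw [e1, ncard_image_eq _ (fun p : K × K => (classOf p.1, classOf p.2)) R, e2,
    Set.Finite.ncard_biUnion (Finset.finite_toSet _), finsum_mem_coe_finset]
  · refine Finset.sum_congr rfl (fun k _ => ?_)
    exact Set.ncard_prod
  · intro k _
    exact (classes_finite Set.inter_subset_right).prod (classes_finite Set.inter_subset_right)
  · intro k _ l _ hkl
    refine Set.disjoint_left.2 ?_
    rintro ⟨c, c'⟩ ⟨⟨g, hg, e⟩, -⟩ ⟨⟨g', hg', e'⟩, -⟩
    apply hkl
    have := (classOf_eq_iff.1 (e.trans e'.symm)).ncard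
    rwa [hg.2.2, hg'.2.2, varsUpTo_ncard, varsUpTo_ncard] at this
  · rintro ⟨g, h⟩ ⟨hg, hh, d, -⟩ ⟨g', h'⟩ ⟨hg', hh', d', -⟩
    simp only [Prod.mk.injEq, classOf_eq_iff] at *
    rw [iso_quot (hU g hg) (hV h hh) (hU g' hg') (hV h' hh') d d']
    constructor
    · rintro (h1 | h1)
      · exact h1
      · exact hinj g hg g' hg' h hh h' hh' h1.1 h1.2
    · exact Or.inl


/-- A choice of one of the two classes `[g]`, `[-g]` of second type. -/
def MB : Set K := {g | g ∈ SB ∧ WellOrderingRel (classOf g) (classOf (-g))}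

lemma MB_iso {f g : K} (i : Iso f g) (h : f ∈ MB) : g ∈ MB := by
  refine ⟨SB_iso i h.1, ?_⟩
  rw [← classOf_eq_iff.2 i, ← classOf_eq_iff.2 i.neg]
  exact h.2

lemma MB_or {g : K} (h : g ∈ SB) : g ∈ MB ∨ -g ∈ MB := by
  rcases trichotomous_of WellOrderingRel (classOf g) (classOf (-g)) with h1 | h1 | h1
  · exact Or.inl ⟨h, h1⟩
  · exact absurd (classOf_eq_iff.1 h1) h.1.2.2
  · exact Or.inr ⟨SB_neg h, by rwa [neg_neg]⟩

lemma MB_not {g : K} (h : g ∈ MB) (h' : -g ∈ MB) : False := by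
  have := h'.2
  rw [neg_neg] at this
  exact asymm_of WellOrderingRel h.2 this

lemma classOf_neg (f : K) : classOf (-f) = (fun x => -x) '' classOf f := by
  ext g
  constructor
  · intro h
    refine ⟨-g, ?_, neg_neg g⟩
    have := Iso.neg h
    rwa [neg_neg] at this
  · rintro ⟨x, hx, rfl⟩
    exact Iso.neg hx

lemma AEn_neg {f : K} {k : ℕ} (h : f ∈ AEn k) (h' : IsAE (-f)) : -f ∈ AEn k :=
  ⟨h', by rw [Vars_neg]; exact h.2⟩

lemma count_MB (k : ℕ) : countClasses (SB ∩ AEn k) = 2 * countClasses (MB ∩ AEn k) := by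
  have e : SB ∩ AEn k = (MB ∩ AEn k) ∪ (fun x => -x) '' (MB ∩ AEn k) := by
    ext g
    constructor
    · rintro ⟨h1, h2⟩
      rcases MB_or h1 with h | h
      · exact Or.inl ⟨h, h2⟩
      · exact Or.inr ⟨-g, ⟨h, AEn_neg h2 h1.1.2.1⟩, neg_neg g⟩
    · rintro (⟨h1, h2⟩ | ⟨x, ⟨h1, h2⟩, rfl⟩)
      · exact ⟨h1.1, h2⟩
      · exact ⟨SB_neg h1.1, AEn_neg h2 h1.1.1.2.1⟩
  rw [e, count_union (n := k) Set.inter_subset_right, two_mul]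
  · congr 1
    unfold countClasses
    have : classes ((fun x => -x) '' (MB ∩ AEn k)) =
        (Set.image (fun x : K => -x)) '' classes (MB ∩ AEn k) := by
      unfold classes
      rw [Set.image_image, Set.image_image]
      exact Set.image_congr (fun f _ => classOf_neg f)
    rw [this]
    exact Set.ncard_image_of_injective _ (Set.image_injective.2 neg_injective)
  · rintro _ ⟨x, ⟨h1, h2⟩, rfl⟩
    exact AEn_neg h2 h1.1.1.2.1
  · rintro a ⟨ha, -⟩ _ ⟨b, ⟨hb, -⟩, rfl⟩ i
    exact MB_not hb (MB_iso i ha)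

/-- No element of `U` is isomorphic, up to sign, to an element of `V`. -/
def SepSet (U V : Set K) : Prop := ∀ g ∈ U, ∀ h ∈ V, ¬ Iso g h ∧ ¬ Iso g (-h)

lemma SepSet.symm {U V : Set K} (h : SepSet U V) : SepSet V U := fun g hg k hk =>
  ⟨fun i => (h k hk g hg).1 i.symm, fun i => (h k hk g hg).2 (by
    have := i.neg; rw [neg_neg] at this; exact this.symm)⟩

lemma SepSet.mono {U V U' V' : Set K} (h : SepSet U V) (hU : U' ⊆ U) (hV : V' ⊆ V) : SepSet U' V' :=
  fun g hg k hk => h g (hU hg) k (hV hk)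

lemma sep_FB : SepSet SF SB := fun _ hg _ hh =>
  ⟨fun i => not_SF_SB (SF_iso i hg) hh, fun i => not_SF_SB (SF_iso i hg) (SB_neg hh)⟩
lemma sep_FC : SepSet SF SC := fun _ hg _ hh =>
  ⟨fun i => not_SF_SC (SF_iso i hg) hh, fun i => not_SF_SC (SF_iso i hg) (SC_neg hh)⟩
lemma sep_BC : SepSet SB SC := fun _ hg _ hh =>
  ⟨fun i => not_SB_SC (SB_iso i hg) hh, fun i => not_SB_SC (SB_iso i hg) (SC_neg hh)⟩

lemma MB_sub : MB ⊆ SB := fun _ h => h.1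
lemma sep_FM : SepSet SF MB := sep_FB.mono subset_rfl MB_sub
lemma sep_MC : SepSet MB SC := sep_BC.mono MB_sub subset_rfl

lemma ndF : ∀ g ∈ SF, ND g := fun _ h => h.2
lemma ndB : ∀ g ∈ SB, ND g := fun _ h => h.2
lemma ndC : ∀ g ∈ SC, ND g := fun _ h => h.2
lemma ndM : ∀ g ∈ MB, ND g := fun _ h => h.1.2

lemma quo_sep {U V U' V' : Set K} {n : ℕ} (hU : ∀ g ∈ U, ND g) (hV : ∀ g ∈ V, ND g)
    (hU' : ∀ g ∈ U', ND g) (hV' : ∀ g ∈ V', ND g) (h : SepSet U U' ∨ SepSet V V') :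
    ∀ a ∈ Quo U V n, ∀ b ∈ Quo U' V' n, ¬ Iso a b := by
  rintro _ ⟨g, hg, k, hk, d, -, rfl⟩ _ ⟨g', hg', k', hk', d', -, rfl⟩ i
  rw [iso_quot (hU g hg) (hV k hk) (hU' g' hg') (hV' k' hk') d d'] at i
  rcases h with h | h
  · have := h g hg g' hg'; tauto
  · have := h k hk k' hk'; tauto

lemma noneg_F {g g' : K} (h : g ∈ SF) (h' : g' ∈ SF) (i : Iso g (-g')) : False :=
  SF_neg h' (SF_iso i h).2
lemma noneg_M {g g' : K} (h : g ∈ MB) (h' : g' ∈ MB) (i : Iso g (-g')) : False :=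
  MB_not h' (MB_iso i h)
lemma neg_C {g g' : K} (h' : g' ∈ SC) (i : Iso g (-g')) : Iso g g' :=
  i.trans h'.1.2.2.symm

lemma mem_div {T : K → Prop} {f : K} {n : ℕ} :
    ((T f ∧ EndsIn f {Op.div}) ∧ f ∈ AEn n) ↔ T f ∧ ∃ g h, ND g ∧ ND h ∧
      Disjoint (Vars g) (Vars h) ∧ Vars g ∪ Vars h = varsUpTo n ∧ f = g / h := by
  constructor
  · rintro ⟨⟨hT, o, ho, e⟩, hA⟩
    rw [Set.mem_singleton_iff.1 ho] at e
    obtain ⟨g, h, hg, hh, d, rfl⟩ := ends_div_inv e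
    refine ⟨hT, g, h, hg, hh, d, ?_, rfl⟩
    rw [← hg.isAE.Vars_div hh.isAE d, hA.2]
  · rintro ⟨hT, g, h, hg, hh, d, hv, rfl⟩
    exact ⟨⟨hT, _, rfl, mk_div hg hh d⟩, .div hg.isAE hh.isAE d, by
      rw [hg.isAE.Vars_div hh.isAE d, hv]⟩

lemma F_eq (n : ℕ) : Fset {Op.div} ∩ AEn n = Quo SF SF n := by
  ext f
  refine (mem_div (T := FirstType)).trans ⟨?_, ?_⟩
  · rintro ⟨hT, g, h, hg, hh, d, hv, rfl⟩
    rw [quot_first hg hh d] at hT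
    exact ⟨g, hT.1, h, hT.2, d, hv, rfl⟩
  · rintro ⟨g, hg, h, hh, d, hv, rfl⟩
    exact ⟨(quot_first hg.2 hh.2 d).2 ⟨hg, hh⟩, g, h, hg.2, hh.2, d, hv, rfl⟩

lemma quo_neg {U V : Set K} {n : ℕ} {g h : K} (hg : -g ∈ U) (hh : -h ∈ V)
    (d : Disjoint (Vars g) (Vars h)) (hv : Vars g ∪ Vars h = varsUpTo n) : g / h ∈ Quo U V n :=
  ⟨-g, hg, -h, hh, by rwa [Vars_neg, Vars_neg], by rwa [Vars_neg, Vars_neg],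
    (neg_div_neg_eq g h).symm⟩

lemma B_eq (n : ℕ) : Bset {Op.div} ∩ AEn n = (Quo SB SF n ∪ Quo SF SB n) ∪ Quo SB MB n := by
  ext f
  refine (mem_div (T := SecondType)).trans ⟨?_, ?_⟩
  · rintro ⟨hT, g, h, hg, hh, d, hv, rfl⟩
    rw [quot_second hg hh d] at hT
    rcases hT with ⟨a, b⟩ | ⟨a, b⟩ | ⟨a, b⟩
    · exact Or.inl (Or.inl ⟨g, a, h, b, d, hv, rfl⟩)
    · exact Or.inl (Or.inr ⟨g, a, h, b, d, hv, rfl⟩)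
    · right
      rcases MB_or b with b' | b'
      · exact ⟨g, a, h, b', d, hv, rfl⟩
      · exact quo_neg (SB_neg a) b' d hv
  · rintro ((⟨g, a, h, b, d, hv, rfl⟩ | ⟨g, a, h, b, d, hv, rfl⟩) | ⟨g, a, h, b, d, hv, rfl⟩)
    · exact ⟨(quot_second a.2 b.2 d).2 (Or.inl ⟨a, b⟩), g, h, a.2, b.2, d, hv, rfl⟩
    · exact ⟨(quot_second a.2 b.2 d).2 (Or.inr (Or.inl ⟨a, b⟩)), g, h, a.2, b.2, d, hv, rfl⟩
    · exact ⟨(quot_second a.2 b.1.2 d).2 (Or.inr (Or.inr ⟨a, b.1⟩)), g, h, a.2, b.1.2, d, hv, rfl⟩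

lemma C_eq (n : ℕ) : Cset {Op.div} ∩ AEn n =
    (((Quo SC SF n ∪ Quo SF SC n) ∪ Quo SC MB n) ∪ Quo MB SC n) ∪ Quo SC SC n := by
  ext f
  refine (mem_div (T := ThirdType)).trans ⟨?_, ?_⟩
  · rintro ⟨hT, g, h, hg, hh, d, hv, rfl⟩
    rw [quot_third hg hh d] at hT
    rcases hT with a | b
    · rcases hh.trichotomy with b | b | b
      · exact Or.inl (Or.inl (Or.inl (Or.inl ⟨g, a, h, b, d, hv, rfl⟩)))
      · refine Or.inl (Or.inl (Or.inr ?_))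
        rcases MB_or b with b' | b'
        · exact ⟨g, a, h, b', d, hv, rfl⟩
        · exact quo_neg (SC_neg a) b' d hv
      · exact Or.inr ⟨g, a, h, b, d, hv, rfl⟩
    · rcases hg.trichotomy with a | a | a
      · exact Or.inl (Or.inl (Or.inl (Or.inr ⟨g, a, h, b, d, hv, rfl⟩)))
      · refine Or.inl (Or.inr ?_)
        rcases MB_or a with a' | a'
        · exact ⟨g, a', h, b, d, hv, rfl⟩
        · exact quo_neg a' (SC_neg b) d hv
      · exact Or.inr ⟨g, a, h, b, d, hv, rfl⟩
  · have key : ∀ g h : K, ND g → ND h → Disjoint (Vars g) (Vars h) →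
        Vars g ∪ Vars h = varsUpTo n → (g ∈ SC ∨ h ∈ SC) → ThirdType (g / h) ∧
        ∃ g' h', ND g' ∧ ND h' ∧ Disjoint (Vars g') (Vars h') ∧
        Vars g' ∪ Vars h' = varsUpTo n ∧ g / h = g' / h' := fun g h hg hh d hv hc =>
      ⟨(quot_third hg hh d).2 hc, g, h, hg, hh, d, hv, rfl⟩
    rintro ((((⟨g, a, h, b, d, hv, rfl⟩ | ⟨g, a, h, b, d, hv, rfl⟩) | ⟨g, a, h, b, d, hv, rfl⟩) |
      ⟨g, a, h, b, d, hv, rfl⟩) | ⟨g, a, h, b, d, hv, rfl⟩)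
    · exact key g h a.2 b.2 d hv (Or.inl a)
    · exact key g h a.2 b.2 d hv (Or.inr b)
    · exact key g h a.2 b.1.2 d hv (Or.inl a)
    · exact key g h a.1.2 b.2 d hv (Or.inr b)
    · exact key g h a.2 b.2 d hv (Or.inl a)

lemma sum_reflect (a b : ℕ → ℕ) (n : ℕ) : ∑ k ∈ Finset.Icc 1 (n - 1), a k * b (n - k) =
    ∑ k ∈ Finset.Icc 1 (n - 1), a (n - k) * b k := by
  refine Finset.sum_nbij' (fun k => n - k) (fun k => n - k) ?_ ?_ ?_ ?_ ?_
  · intro k hk; simp only [Finset.mem_Icc] at *; omega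
  · intro k hk; simp only [Finset.mem_Icc] at *; omega
  · intro k hk; simp only [Finset.mem_Icc] at *; omega
  · intro k hk; simp only [Finset.mem_Icc] at *; omega
  · intro k hk
    simp only [Finset.mem_Icc] at hk
    rw [show n - (n - k) = k by omega]

lemma not_iso_union {A B C : Set K} (h1 : ∀ a ∈ A, ∀ c ∈ C, ¬ Iso a c)
    (h2 : ∀ a ∈ B, ∀ c ∈ C, ¬ Iso a c) : ∀ a ∈ A ∪ B, ∀ c ∈ C, ¬ Iso a c :=
  fun a ha => ha.elim (h1 a) (h2 a)

lemma count_F (n : ℕ) : countClasses (Fset {Op.div} ∩ AEn n) = ∑ k ∈ Finset.Icc 1 (n - 1),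
    countClasses (SF ∩ AEn k) * countClasses (SF ∩ AEn (n - k)) := by
  rw [F_eq, count_quo ndF ndF (fun _ _ => SF_iso) (fun _ _ => SF_iso)]
  intro g hg g' hg' h hh h' hh' i _
  exact (noneg_F hg hg' i).elim

lemma count_B (n : ℕ) : countClasses (Bset {Op.div} ∩ AEn n) = ∑ k ∈ Finset.Icc 1 (n - 1),
    countClasses (SB ∩ AEn (n - k)) *
      (2 * countClasses (SF ∩ AEn k) + countClasses (MB ∩ AEn k)) := by
  rw [B_eq, count_union (n := n) (Set.union_subset (Quo_sub ndB ndF n) (Quo_sub ndF ndB n))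
    (Quo_sub ndB ndM n) (not_iso_union (quo_sep ndB ndF ndB ndM (Or.inr sep_FM))
      (quo_sep ndF ndB ndB ndM (Or.inl sep_FB))),
    count_union (Quo_sub ndB ndF n) (Quo_sub ndF ndB n)
      (quo_sep ndB ndF ndF ndB (Or.inl sep_FB.symm)),
    count_quo ndB ndF (fun _ _ => SB_iso) (fun _ _ => SF_iso)
      (fun g hg g' hg' h hh h' hh' i j => (noneg_F hh hh' j).elim),
    count_quo ndF ndB (fun _ _ => SF_iso) (fun _ _ => SB_iso)
      (fun g hg g' hg' h hh h' hh' i j => (noneg_F hg hg' i).elim),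
    count_quo ndB ndM (fun _ _ => SB_iso) (fun _ _ => MB_iso)
      (fun g hg g' hg' h hh h' hh' i j => (noneg_M hh hh' j).elim),
    sum_reflect (fun k => countClasses (SB ∩ AEn k)) (fun k => countClasses (SF ∩ AEn k)),
    sum_reflect (fun k => countClasses (SB ∩ AEn k)) (fun k => countClasses (MB ∩ AEn k)),
    ← Finset.sum_add_distrib, ← Finset.sum_add_distrib]
  exact Finset.sum_congr rfl (fun k _ => by ring)

lemma count_C (n : ℕ) : countClasses (Cset {Op.div} ∩ AEn n) = ∑ k ∈ Finset.Icc 1 (n - 1),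
    countClasses (SC ∩ AEn (n - k)) *
      (2 * countClasses (SF ∩ AEn k) + countClasses (SB ∩ AEn k) + countClasses (SC ∩ AEn k)) := by
  have s1 := Quo_sub ndC ndF n
  have s2 := Quo_sub ndF ndC n
  have s3 := Quo_sub ndC ndM n
  have s4 := Quo_sub ndM ndC n
  have s5 := Quo_sub ndC ndC n
  rw [C_eq, count_union (Set.union_subset (Set.union_subset (Set.union_subset s1 s2) s3) s4) s5
      (not_iso_union (not_iso_union (not_iso_union
        (quo_sep ndC ndF ndC ndC (Or.inr sep_FC)) (quo_sep ndF ndC ndC ndC (Or.inl sep_FC)))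
        (quo_sep ndC ndM ndC ndC (Or.inr sep_MC))) (quo_sep ndM ndC ndC ndC (Or.inl sep_MC))),
    count_union (Set.union_subset (Set.union_subset s1 s2) s3) s4
      (not_iso_union (not_iso_union
        (quo_sep ndC ndF ndM ndC (Or.inr sep_FC)) (quo_sep ndF ndC ndM ndC (Or.inl sep_FM)))
        (quo_sep ndC ndM ndM ndC (Or.inr sep_MC))),
    count_union (Set.union_subset s1 s2) s3 (not_iso_union
        (quo_sep ndC ndF ndC ndM (Or.inr sep_FM)) (quo_sep ndF ndC ndC ndM (Or.inl sep_FC))),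
    count_union s1 s2 (quo_sep ndC ndF ndF ndC (Or.inr sep_FC)),
    count_quo ndC ndF (fun _ _ => SC_iso) (fun _ _ => SF_iso)
      (fun g hg g' hg' h hh h' hh' i j => (noneg_F hh hh' j).elim),
    count_quo ndF ndC (fun _ _ => SF_iso) (fun _ _ => SC_iso)
      (fun g hg g' hg' h hh h' hh' i j => (noneg_F hg hg' i).elim),
    count_quo ndC ndM (fun _ _ => SC_iso) (fun _ _ => MB_iso)
      (fun g hg g' hg' h hh h' hh' i j => (noneg_M hh hh' j).elim),
    count_quo ndM ndC (fun _ _ => MB_iso) (fun _ _ => SC_iso)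
      (fun g hg g' hg' h hh h' hh' i j => (noneg_M hg hg' i).elim),
    count_quo ndC ndC (fun _ _ => SC_iso) (fun _ _ => SC_iso)
      (fun g hg g' hg' h hh h' hh' i j => ⟨neg_C hg' i, neg_C hh' j⟩),
    sum_reflect (fun k => countClasses (SC ∩ AEn k)) (fun k => countClasses (SF ∩ AEn k)),
    sum_reflect (fun k => countClasses (SC ∩ AEn k)) (fun k => countClasses (MB ∩ AEn k)),
    sum_reflect (fun k => countClasses (SC ∩ AEn k)) (fun k => countClasses (SC ∩ AEn k)),
    ← Finset.sum_add_distrib, ← Finset.sum_add_distrib, ← Finset.sum_add_distrib,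
    ← Finset.sum_add_distrib]
  exact Finset.sum_congr rfl (fun k _ => by rw [count_MB]; ring)


/-- For `n ≥ 2`:
`|ℱ̄ₙ(÷)| = Σ_{k=1}^{n−1} |ℱ̄_k(+,×)|·|ℱ̄_{n−k}(+,×)|`,
`|ℬ̄ₙ(÷)| = Σ_{k=1}^{n−1} |ℬ̄_{n−k}(+,−,×)|·(2|ℱ̄_k(+,×)| + ½|ℬ̄_k(+,−,×)|)`, and
`|𝒞̄ₙ(÷)| = Σ_{k=1}^{n−1} |𝒞̄_{n−k}(+,−,×)|·(2|ℱ̄_k(+,×)| + |ℬ̄_k(+,−,×)| + |𝒞̄_k(+,−,×)|)`. -/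
theorem count_div (n : ℕ) (hn : 2 ≤ n) :
    countClasses (Fset {Op.div} ∩ AEn n) =
      ∑ k ∈ Finset.Icc 1 (n - 1),
        countClasses (Fset {Op.add, Op.mul} ∩ AEn k) *
          countClasses (Fset {Op.add, Op.mul} ∩ AEn (n - k)) ∧
    (countClasses (Bset {Op.div} ∩ AEn n) : ℚ) =
      ∑ k ∈ Finset.Icc 1 (n - 1),
        (countClasses (Bset {Op.add, Op.sub, Op.mul} ∩ AEn (n - k)) : ℚ) *
          (2 * (countClasses (Fset {Op.add, Op.mul} ∩ AEn k) : ℚ) +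
            (1 / 2) * (countClasses (Bset {Op.add, Op.sub, Op.mul} ∩ AEn k) : ℚ)) ∧
    countClasses (Cset {Op.div} ∩ AEn n) =
      ∑ k ∈ Finset.Icc 1 (n - 1),
        countClasses (Cset {Op.add, Op.sub, Op.mul} ∩ AEn (n - k)) *
          (2 * countClasses (Fset {Op.add, Op.mul} ∩ AEn k) +
            countClasses (Bset {Op.add, Op.sub, Op.mul} ∩ AEn k) +
            countClasses (Cset {Op.add, Op.sub, Op.mul} ∩ AEn k)) := by
  rw [SF_eq, SB_eq, SC_eq]
  refine ⟨count_F n, ?_, count_C n⟩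
  rw [count_B n]
  push_cast
  refine Finset.sum_congr rfl (fun k _ => ?_)
  rw [count_MB k]
  push_cast
  ring

end
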